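/- arXiv:1901.09453 — 4 statements merged into one kernel-verified Lean document; each statement's English description precedes it below -/
import Mathlib

section
/- Let X be a measurable space, D_S a probability measure on X, f_S : X → [0,1] a measurable labeling function, and H a countable nonempty set of measurable functions from X to [0,1]. Fix n ≥ 1 and δ ∈ (0,1). Then with probability at least 1 − δ over an i.i.d. sample S = (x_1, …, x_n) drawn from D_S^n, the following holds simultaneously for all h ∈ H: E_{x∼D_S}[|h(x) − f_S(x)|] ≤ (1/n)·Σ_{i=1}^n |h(x_i) − f_S(x_i)| + 2·Rad_S(H) + 3·√(log(2/δ)/(2n)). -/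
open MeasureTheory Set

/-- The empirical Rademacher complexity of the class `H` w.r.t. the sample `x`:
the expectation, over i.i.d. uniform signs `σ ∈ {−1,+1}^n`, of
`sup_{h ∈ H} (1/n) ∑ i σ_i h(x_i)`.  The expectation is written as the average
over all `2^n` sign vectors (encoded as `Fin n → Bool`). -/
noncomputable def radS {X : Type*} {n : ℕ} (x : Fin n → X) (H : Set (X → ℝ)) : ℝ :=
  (∑ σ : Fin n → Bool,
    sSup ((fun h => (1 / (n : ℝ)) * ∑ i, (if σ i then (1 : ℝ) else -1) * h (x i)) '' H))
    / 2 ^ n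


lemma ciSup_sub_le_aux {f g : ℕ → ℝ} {c : ℝ} (hg : BddAbove (range g))
    (h : ∀ k, f k - g k ≤ c) : (⨆ k, f k) - ⨆ k, g k ≤ c := by
  have : (⨆ k, f k) ≤ (⨆ k, g k) + c := ciSup_le fun k => by
    have := le_ciSup hg k
    have := h k
    linarith
  linarith

lemma ciSup_add_le_aux {f g : ℕ → ℝ} {B : ℝ} (h : ∀ k l, f k + g l ≤ B) :
    (⨆ k, f k) + ⨆ k, g k ≤ B := by
  have : (⨆ k, f k) ≤ B - ⨆ k, g k := ciSup_le fun k => by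
    have : (⨆ l, g l) ≤ B - f k := ciSup_le fun l => by linarith [h k l]
    linarith
  linarith

def sg (b : Bool) : ℝ := if b then (1 : ℝ) else -1

lemma abs_sg (b : Bool) : |sg b| = 1 := by cases b <;> simp [sg]

lemma abs_sum_sg {n : ℕ} {C : ℝ} (a : Fin n → ℝ) (ha : ∀ i, |a i| ≤ C) (σ : Fin n → Bool) :
    |∑ i, sg (σ i) * a i| ≤ n * C := by
  refine (Finset.abs_sum_le_sum_abs _ _).trans ?_
  calc _ ≤ ∑ i : Fin n, C := Finset.sum_le_sum fun i _ => by rw [abs_mul, abs_sg, one_mul]; exact ha i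
    _ = _ := by simp

lemma bdd_of_abs {f : ℕ → ℝ} {C : ℝ} (h : ∀ k, |f k| ≤ C) : BddAbove (range f) :=
  ⟨C, by rintro _ ⟨k, rfl⟩; exact (abs_le.1 (h k)).2⟩

lemma abs_ciSup_le {f : ℕ → ℝ} {C : ℝ} (h : ∀ k, |f k| ≤ C) : |⨆ k, f k| ≤ C :=
  abs_le.2 ⟨(abs_le.1 (h 0)).1.trans (le_ciSup (bdd_of_abs h) 0),
    ciSup_le fun k => (abs_le.1 (h k)).2⟩

lemma sum_bool_cons {n : ℕ} (F : (Fin (n+1) → Bool) → ℝ) :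
    ∑ σ, F σ = ∑ τ : Fin n → Bool, (F (Fin.cons true τ) + F (Fin.cons false τ)) := by
  rw [← (Fin.consEquiv (fun _ : Fin (n+1) => Bool)).sum_comp, Fintype.sum_prod_type,
    Fintype.sum_bool, Finset.sum_add_distrib]
  rfl

lemma contraction (C : ℝ) : ∀ (n : ℕ) (D : ℝ) (u : ℕ → ℝ) (a b : ℕ → Fin n → ℝ)
    (_ : ∀ k, |u k| ≤ D) (_ : ∀ k i, |a k i| ≤ C) (_ : ∀ k i, |b k i| ≤ C)
    (_ : ∀ k l i, |b k i - b l i| ≤ |a k i - a l i|),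
    ∑ σ : Fin n → Bool, (⨆ k, (u k + ∑ i, sg (σ i) * b k i)) ≤
      ∑ σ : Fin n → Bool, (⨆ k, (u k + ∑ i, sg (σ i) * a k i)) := by
  intro n
  induction n with
  | zero => intro D u a b _ _ _ _; simp
  | succ n ih =>
    intro D u a b hu ha hb hab
    rw [sum_bool_cons, sum_bool_cons]
    have key : ∀ s : Bool, ∑ τ : Fin n → Bool,
        (⨆ k, (u k + ∑ i, sg ((Fin.cons s τ : Fin (n+1) → Bool) i) * b k i)) ≤
        ∑ τ : Fin n → Bool, (⨆ k, ((u k + sg s * b k 0) + ∑ i : Fin n, sg (τ i) * a k i.succ)) := by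
      intro s
      have := ih (D + C) (fun k => u k + sg s * b k 0) (fun k i => a k i.succ)
        (fun k i => b k i.succ) (fun k => (abs_add_le _ _).trans (by
          rw [abs_mul, abs_sg, one_mul]; exact add_le_add (hu k) (hb k 0)))
        (fun k i => ha k _) (fun k i => hb k _) (fun k l i => hab k l _)
      refine le_trans (le_of_eq ?_) this
      refine Finset.sum_congr rfl fun τ _ => ?_
      congr 1; ext k
      rw [Fin.sum_univ_succ]
      simp [add_assoc]
    rw [Finset.sum_add_distrib]
    refine (add_le_add (key true) (key false)).trans ?_
    rw [← Finset.sum_add_distrib]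
    refine Finset.sum_le_sum fun τ _ => ?_
    have bd : ∀ s : Bool, BddAbove (range fun k =>
        (u k + ∑ i, sg ((Fin.cons s τ : Fin (n+1) → Bool) i) * a k i)) := fun s =>
      bdd_of_abs (C := D + (n+1 : ℕ) * C) fun k =>
        (abs_add_le _ _).trans (add_le_add (hu k) (abs_sum_sg _ (ha k) _))
    refine ciSup_add_le_aux fun k l => ?_
    have e : ∀ s k, (u k + ∑ i, sg ((Fin.cons s τ : Fin (n+1) → Bool) i) * a k i)
        = u k + (sg s * a k 0 + ∑ i : Fin n, sg (τ i) * a k i.succ) := by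
      intro s k; rw [Fin.sum_univ_succ]; simp
    have h1 := le_ciSup (bd true) k
    have h2 := le_ciSup (bd true) l
    have h3 := le_ciSup (bd false) k
    have h4 := le_ciSup (bd false) l
    simp only [e] at h1 h2 h3 h4 ⊢
    have h5 := (le_abs_self _).trans (hab k l 0)
    simp only [sg, if_true, Bool.false_eq_true, if_false] at *
    rcases abs_cases (a k 0 - a l 0) with h | h <;> linarith

lemma integrable_bdd {Ω : Type*} [MeasurableSpace Ω] {μ : Measure Ω} [IsProbabilityMeasure μ]
    {f : Ω → ℝ} (hf : Measurable f) {C : ℝ} (h : ∀ ω, |f ω| ≤ C) : Integrable f μ :=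
  Integrable.of_bound hf.aestronglyMeasurable C (Filter.Eventually.of_forall h)

lemma integral_comp_mp {Ω Ω' : Type*} [MeasurableSpace Ω] [MeasurableSpace Ω'] {μ : Measure Ω}
    {ν : Measure Ω'} {T : Ω → Ω'} (hT : MeasurePreserving T μ ν) {f : Ω' → ℝ} (hf : Measurable f) :
    ∫ ω, f (T ω) ∂μ = ∫ y, f y ∂ν := by
  rw [← hT.map_eq, integral_map hT.measurable.aemeasurable hf.aestronglyMeasurable]

lemma integral_pi_succ {X : Type*} [MeasurableSpace X] (DS : Measure X) [IsProbabilityMeasure DS]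
    {n : ℕ} (F : (Fin (n+1) → X) → ℝ) (hF : Measurable F) {C : ℝ} (h : ∀ ω, |F ω| ≤ C) :
    Measurable (fun p : X × (Fin n → X) => F (Fin.cons p.1 p.2)) ∧
    ∫ ω, F ω ∂(Measure.pi fun _ : Fin (n+1) => DS) =
      ∫ x, ∫ y, F (Fin.cons x y) ∂(Measure.pi fun _ : Fin n => DS) ∂DS := by
  have e := (measurePreserving_piFinSuccAbove (fun _ : Fin (n+1) => DS) 0).symm
  have hm : Measurable (fun p : X × (Fin n → X) => F (Fin.cons p.1 p.2)) := by
    have := hF.comp e.measurable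
    convert this using 1
    ext p
    simp [MeasurableEquiv.piFinSuccAbove, Fin.insertNthEquiv]
  refine ⟨hm, ?_⟩
  rw [← integral_comp_mp e hF]
  have := integral_prod (μ := DS) (ν := Measure.pi fun _ : Fin n => DS) _
    (integrable_bdd hm fun p => h _)
  rw [← this]
  congr 1
  ext p
  simp [MeasurableEquiv.piFinSuccAbove, Fin.insertNthEquiv]

lemma abs_integral_bdd {Ω : Type*} [MeasurableSpace Ω] {μ : Measure Ω} [IsProbabilityMeasure μ]
    {f : Ω → ℝ} {C : ℝ} (h : ∀ ω, |f ω| ≤ C) : |∫ ω, f ω ∂μ| ≤ C := by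
  have := norm_integral_le_of_norm_le_const (μ := μ) (f := f) (C := C) (Filter.Eventually.of_forall h)
  simpa using this

lemma mcdiarmid_mgf {X : Type*} [MeasurableSpace X] (DS : Measure X) [IsProbabilityMeasure DS]
    (s c M : ℝ) : ∀ (n : ℕ) (f : (Fin n → X) → ℝ) (_ : Measurable f)
    (_ : ∀ ω, |f ω| ≤ M)
    (_ : ∀ i ω ω', (∀ j, j ≠ i → ω j = ω' j) → f ω - f ω' ≤ c),
    ∫ ω, Real.exp (s * f ω) ∂(Measure.pi fun _ : Fin n => DS) ≤
      Real.exp (s * (∫ ω, f ω ∂(Measure.pi fun _ : Fin n => DS)) + n * (c^2 * s^2 / 8)) := by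
  intro n
  induction n with
  | zero =>
    intro f _ _ _
    have : ∀ ω, f ω = f default := fun ω => congrArg f (Subsingleton.elim _ _)
    simp_rw [this]
    simp
  | succ n ih =>
    intro f hf hM hc
    have hexp : ∀ {t : ℝ}, |t| ≤ M → |Real.exp (s * t)| ≤ Real.exp (|s| * M) := by
      intro t ht
      rw [abs_of_pos (Real.exp_pos _)]
      apply Real.exp_le_exp.2
      refine (le_abs_self _).trans ?_
      rw [abs_mul]
      gcongr
    obtain ⟨m1, e1⟩ := integral_pi_succ DS f hf hM
    obtain ⟨m2, e2⟩ := integral_pi_succ DS (fun ω => Real.exp (s * f ω)) (by fun_prop)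
      (fun ω => hexp (hM ω))
    rw [e1, e2]
    set g : X → ℝ := fun x => ∫ y, f (Fin.cons x y) ∂(Measure.pi fun _ : Fin n => DS) with hg
    have gm : Measurable g := m1.stronglyMeasurable.integral_prod_right'.measurable
    have gM : ∀ x, |g x| ≤ M := fun x => abs_integral_bdd fun y => hM _
    have hmeasx : ∀ x, Measurable fun y : Fin n → X => f (Fin.cons x y) := fun x =>
      m1.comp measurable_prodMk_left
    have gc : ∀ x x', g x - g x' ≤ c := by
      intro x x'
      rw [hg]
      simp only
      rw [← integral_sub (integrable_bdd (hmeasx x) fun y => hM _) (integrable_bdd (hmeasx x') fun y => hM _)]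
      refine (integral_mono (g := fun _ => c) ((integrable_bdd (hmeasx x) fun y => hM _).sub
        (integrable_bdd (hmeasx x') fun y => hM _)) (integrable_const _) fun y => ?_).trans (by simp)
      refine hc 0 _ _ fun j hj => ?_
      obtain ⟨k, rfl⟩ := Fin.exists_succ_eq.2 hj
      simp
    have st : ∀ x, ∫ y, Real.exp (s * f (Fin.cons x y)) ∂(Measure.pi fun _ : Fin n => DS) ≤
        Real.exp (s * g x) * Real.exp (n * (c^2 * s^2 / 8)) := by
      intro x
      rw [← Real.exp_add]
      refine ih (fun y => f (Fin.cons x y)) (hmeasx x) (fun y => hM _) fun i ω ω' h => ?_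
      refine hc i.succ _ _ fun j hj => ?_
      refine Fin.cases (fun _ => by simp) (fun k hk => ?_) j hj
      simp only [Fin.cons_succ]
      exact h k (by rintro rfl; exact hk rfl)
    have ig : Integrable (fun x => Real.exp (s * g x)) DS :=
      integrable_bdd (by fun_prop) fun x => hexp (gM x)
    have hoeff : ∫ x, Real.exp (s * g x) ∂DS ≤ Real.exp (s * (∫ x, g x ∂DS) + c^2 * s^2 / 8) := by
      have bb : BddBelow (range g) := ⟨-M, by rintro _ ⟨x, rfl⟩; exact (abs_le.1 (gM x)).1⟩
      have : Nonempty X := nonempty_of_isProbabilityMeasure DS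
      have hI : ∀ x, g x ∈ Icc (⨅ x, g x) ((⨅ x, g x) + c) := fun x => ⟨ciInf_le bb x, by
        have : g x - c ≤ ⨅ x, g x := le_ciInf fun x' => by linarith [gc x x']
        linarith⟩
      have := (ProbabilityTheory.hasSubgaussianMGF_of_mem_Icc (μ := DS) gm.aemeasurable
        (Filter.Eventually.of_forall hI)).mgf_le s
      rw [ProbabilityTheory.mgf] at this
      have e0 : ∀ x, Real.exp (s * (g x - ∫ x, g x ∂DS)) =
          Real.exp (s * g x) * Real.exp (-(s * ∫ x, g x ∂DS)) := fun x => by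
        rw [← Real.exp_add]; congr 1; ring
      simp_rw [e0] at this
      rw [integral_mul_const] at this
      have e : (((‖(⨅ x, g x) + c - (⨅ x, g x)‖₊ / 2) ^ 2 : NNReal) : ℝ) * s^2 / 2
          = c^2 * s^2 / 8 := by
        push_cast
        rw [show (⨅ x, g x) + c - (⨅ x, g x) = c by ring, Real.norm_eq_abs, div_pow, sq_abs]
        ring
      rw [e] at this
      rw [Real.exp_add]
      have h2 := mul_le_mul_of_nonneg_left this (Real.exp_pos (s * ∫ x, g x ∂DS)).le
      refine le_trans (le_of_eq ?_) h2
      rw [mul_comm, mul_assoc, ← Real.exp_add]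
      simp
    refine (integral_mono (g := fun x => Real.exp (s * g x) * Real.exp (n * (c^2 * s^2 / 8)))
      ?_ (ig.mul_const _) st).trans ?_
    · exact integrable_bdd (m2.stronglyMeasurable.integral_prod_right'.measurable)
        fun x => abs_integral_bdd fun y => hexp (hM _)
    · rw [integral_mul_const]
      refine (mul_le_mul_of_nonneg_right hoeff (Real.exp_pos _).le).trans (le_of_eq ?_)
      rw [← Real.exp_add]
      congr 1
      push_cast
      ring

lemma mcdiarmid {X : Type*} [MeasurableSpace X] (DS : Measure X) [IsProbabilityMeasure DS]
    {c M : ℝ} (hc0 : 0 < c) {n : ℕ} (hn : 1 ≤ n) (f : (Fin n → X) → ℝ) (hf : Measurable f)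
    (hM : ∀ ω, |f ω| ≤ M)
    (hc : ∀ i ω ω', (∀ j, j ≠ i → ω j = ω' j) → f ω - f ω' ≤ c)
    (h0 : ∫ ω, f ω ∂(Measure.pi fun _ : Fin n => DS) ≤ 0) {t : ℝ} (ht : 0 ≤ t) :
    (Measure.pi fun _ : Fin n => DS).real {ω | t ≤ f ω} ≤ Real.exp (- 2 * t^2 / (n * c^2)) := by
  have hn' : (0:ℝ) < n := by exact_mod_cast hn
  set s := 4 * t / (n * c^2) with hs
  have hs0 : 0 ≤ s := by positivity
  have h1 := ProbabilityTheory.measure_ge_le_exp_mul_mgf (X := f)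
    (μ := Measure.pi fun _ : Fin n => DS) t hs0 (integrable_bdd (C := Real.exp (s * M)) (by fun_prop)
      (fun ω => by
        rw [abs_of_pos (Real.exp_pos _)]
        apply Real.exp_le_exp.2
        have := (abs_le.1 (hM ω)).2
        gcongr))
  refine h1.trans ?_
  have h2 := mcdiarmid_mgf DS s c M n f hf hM hc
  refine (mul_le_mul_of_nonneg_left h2 (Real.exp_pos _).le).trans ?_
  rw [← Real.exp_add]
  apply Real.exp_le_exp.2
  have : s * ∫ ω, f ω ∂(Measure.pi fun _ : Fin n => DS) ≤ 0 := mul_nonpos_of_nonneg_of_nonpos hs0 h0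
  have e : - s * t + n * (c^2 * s^2/8) = - 2 * t^2 / (n * c^2) := by
    rw [hs]; field_simp; ring
  linarith

lemma symmetrization {X : Type*} [MeasurableSpace X] (DS : Measure X) [IsProbabilityMeasure DS]
    {n : ℕ} (hn : 1 ≤ n) (L : ℕ → X → ℝ) (hL : ∀ k, Measurable (L k)) (hb : ∀ k x, |L k x| ≤ 1) :
    ∫ ω, (⨆ k, (∫ x, L k x ∂DS - (1 / (n:ℝ)) * ∑ i, L k (ω i))) ∂(Measure.pi fun _ : Fin n => DS) ≤
      2 * ∫ ω, (∑ σ : Fin n → Bool, ⨆ k, ((1 / (n:ℝ)) * ∑ i, sg (σ i) * L k (ω i))) / 2^n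
        ∂(Measure.pi fun _ : Fin n => DS) := by
  have hn' : (0:ℝ) < n := by exact_mod_cast hn
  set P := Measure.pi fun _ : Fin n => DS with hP
  set Q := Measure.pi fun _ : Fin n => DS.prod DS with hQ
  -- averages are bounded
  have avg : ∀ {C : ℝ} (v : Fin n → ℝ), (∀ i, |v i| ≤ C) → |(1 / (n:ℝ)) * ∑ i, v i| ≤ C := by
    intro C v hv
    rw [abs_mul, abs_of_pos (by positivity : (0:ℝ) < 1 / n)]
    have : |∑ i, v i| ≤ n * C := (Finset.abs_sum_le_sum_abs _ _).trans
      ((Finset.sum_le_sum fun i _ => hv i).trans (by simp))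
    calc _ ≤ 1 / (n:ℝ) * (n * C) := by gcongr
      _ = C := by field_simp
  have hsgb : ∀ b t, |sg b * t| = |t| := fun b t => by rw [abs_mul, abs_sg, one_mul]
  -- the pair functional
  let Ψ : (Fin n → Bool) → (Fin n → X × X) → ℝ := fun σ p =>
    ⨆ k, (1 / (n:ℝ)) * ∑ i, sg (σ i) * (L k (p i).2 - L k (p i).1)
  let R : (Fin n → Bool) → (Fin n → X) → ℝ := fun σ ω =>
    ⨆ k, (1 / (n:ℝ)) * ∑ i, sg (σ i) * L k (ω i)
  have hd : ∀ k x y, |L k x - L k y| ≤ 2 := fun k x y =>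
    (abs_sub _ _).trans (by linarith [hb k x, hb k y])
  have Ψb' : ∀ (σ : Fin n → Bool) (p : Fin n → X × X) k, |(1 / (n:ℝ)) * ∑ i, sg (σ i) * (L k (p i).2 - L k (p i).1)| ≤ 2 :=
    fun σ p k => avg _ fun i => by rw [hsgb]; exact hd _ _ _
  have Rb' : ∀ (σ : Fin n → Bool) (ω : Fin n → X) k, |(1 / (n:ℝ)) * ∑ i, sg (σ i) * L k (ω i)| ≤ 1 :=
    fun σ p k => avg _ fun i => by rw [hsgb]; exact hb _ _
  have Ψb : ∀ σ p, |Ψ σ p| ≤ 2 := fun σ p => abs_ciSup_le (Ψb' σ p)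
  have Rb : ∀ σ p, |R σ p| ≤ 1 := fun σ p => abs_ciSup_le (Rb' σ p)
  have Ψm : ∀ σ, Measurable (Ψ σ) := fun σ => Measurable.iSup fun k => by fun_prop
  have Rm : ∀ σ, Measurable (R σ) := fun σ => Measurable.iSup fun k => by fun_prop
  -- step 1 : ghost sample
  have T : MeasurePreserving (MeasurableEquiv.arrowProdEquivProdArrow X X (Fin n)).symm (P.prod P) Q :=
    (measurePreserving_arrowProdEquivProdArrow X X (Fin n) (fun _ => DS) (fun _ => DS)).symm
  have cm := (Ψm fun _ => true).comp T.measurable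
  have s1 : ∫ ω, (⨆ k, (∫ x, L k x ∂DS - (1 / (n:ℝ)) * ∑ i, L k (ω i))) ∂P ≤
      ∫ p, Ψ (fun _ => true) p ∂Q := by
    rw [← integral_comp_mp T (Ψm _), integral_prod (fun z => Ψ (fun _ => true)
        ((MeasurableEquiv.arrowProdEquivProdArrow X X (Fin n)).symm z))
        (integrable_bdd cm fun p => Ψb _ _)]
    refine integral_mono (integrable_bdd (C := 2) (Measurable.iSup fun k => by fun_prop) fun ω =>
      abs_ciSup_le fun k => ?_) (integrable_bdd
        (cm.stronglyMeasurable.integral_prod_right'.measurable)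
        fun ω => abs_integral_bdd fun ω' => Ψb _ _) fun ω => ?_
    · refine (abs_sub _ _).trans ?_
      have := abs_integral_bdd (μ := DS) (hb k)
      have := avg (fun i => L k (ω i)) (fun i => hb k _)
      linarith
    · refine ciSup_le fun k => ?_
      have e : ∫ x, L k x ∂DS - (1 / (n:ℝ)) * ∑ i, L k (ω i) =
          ∫ ω', ((1 / (n:ℝ)) * ∑ i, (L k (ω' i) - L k (ω i))) ∂P := by
        have hi : ∀ i : Fin n, ∫ ω', L k (ω' i) ∂P = ∫ x, L k x ∂DS := fun i =>
          integral_comp_mp (measurePreserving_eval (fun _ : Fin n => DS) i) (hL k)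
        have hint : ∀ i : Fin n, Integrable (fun ω' : Fin n → X => L k (ω' i)) P := fun i =>
          integrable_bdd (by fun_prop) fun _ => hb k _
        rw [integral_const_mul, integral_finsetSum _ (f := fun (i : Fin n) (ω' : Fin n → X) => L k (ω' i) - L k (ω i))
          fun i _ => (hint i).sub (integrable_const _)]
        simp_rw [integral_sub (hint _) (integrable_const _), hi]
        simp
        field_simp
      rw [e]
      refine integral_mono (integrable_bdd (C := 2) (by fun_prop) fun ω' => avg _ fun i => hd _ _ _)
        (integrable_bdd (cm.comp measurable_prodMk_left) fun p => Ψb _ _) fun ω' => ?_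
      have := le_ciSup (bdd_of_abs (Ψb' (fun _ => true) (fun i => (ω i, ω' i)))) k
      refine le_trans (le_of_eq ?_) this
      simp [sg]
  -- step 2 : swapping
  have s2 : ∀ σ, ∫ p, Ψ (fun _ => true) p ∂Q = ∫ p, Ψ σ p ∂Q := by
    intro σ
    have hT : MeasurePreserving (fun (p : Fin n → X × X) i =>
        (if σ i then id else Prod.swap : X × X → X × X) (p i)) Q Q := by
      refine measurePreserving_pi _ _ fun i => ?_
      by_cases h : σ i
      · simp only [h, if_true]; exact MeasurePreserving.id _
      · simp only [h]; exact Measure.measurePreserving_swap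
    rw [← integral_comp_mp hT (Ψm _)]
    congr 1; ext p
    simp only [Ψ]
    congr 1; ext k
    congr 1
    refine Finset.sum_congr rfl fun i _ => ?_
    by_cases h : σ i <;> simp [h, sg]
  have s3 : ∀ σ, ∫ p, Ψ σ p ∂Q ≤ ∫ ω, R σ ω ∂P + ∫ ω, R (fun i => !(σ i)) ω ∂P := by
    intro σ
    have h2 : MeasurePreserving (fun (p : Fin n → X × X) i => (p i).2) Q P :=
      measurePreserving_pi _ _ fun i => measurePreserving_snd
    have h1 : MeasurePreserving (fun (p : Fin n → X × X) i => (p i).1) Q P :=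
      measurePreserving_pi _ _ fun i => measurePreserving_fst
    have i2 : Integrable (fun p : Fin n → X × X => R σ (fun i => (p i).2)) Q :=
      integrable_bdd ((Rm σ).comp h2.measurable) fun p => Rb _ _
    have i1 : Integrable (fun p : Fin n → X × X => R (fun i => !(σ i)) (fun i => (p i).1)) Q :=
      integrable_bdd ((Rm _).comp h1.measurable) fun p => Rb _ _
    rw [← integral_comp_mp h2 (Rm σ), ← integral_comp_mp h1 (Rm _), ← integral_add i2 i1]
    refine integral_mono (integrable_bdd (Ψm σ) (Ψb σ)) (i2.add i1) fun p => ?_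
    refine ciSup_le fun k => ?_
    have l2 := le_ciSup (bdd_of_abs (Rb' σ fun i => (p i).2)) k
    have l1 := le_ciSup (bdd_of_abs (Rb' (fun i => !(σ i)) fun i => (p i).1)) k
    refine le_trans (le_of_eq ?_) (add_le_add l2 l1)
    simp only
    rw [← mul_add, ← Finset.sum_add_distrib]
    congr 1
    refine Finset.sum_congr rfl fun i _ => ?_
    cases h : σ i <;> simp [sg] <;> ring
  have s4 : ∑ σ : Fin n → Bool, ∫ ω, R (fun i => !(σ i)) ω ∂P = ∑ σ, ∫ ω, R σ ω ∂P :=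
    Equiv.sum_comp (Function.Involutive.toPerm (fun (σ : Fin n → Bool) i => !(σ i))
      (fun σ => by simp)) (fun σ => ∫ ω, R σ ω ∂P)
  have s5 : ∑ σ : Fin n → Bool, ∫ p, Ψ (fun _ => true) p ∂Q ≤ 2 * ∑ σ, ∫ ω, R σ ω ∂P := by
    refine (Finset.sum_le_sum fun σ _ => (s2 σ).le.trans (s3 σ)).trans ?_
    rw [Finset.sum_add_distrib, s4, two_mul]
  refine s1.trans ?_
  rw [integral_div, integral_finsetSum _ fun σ _ => integrable_bdd (Rm σ) (Rb σ)]
  simp at s5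
  rw [← mul_div_assoc, le_div_iff₀ (by positivity)]
  linarith

lemma avg_diff {n : ℕ} (v w : Fin n → ℝ) (i : Fin n) (h : ∀ j, j ≠ i → v j = w j)
    (hi : v i - w i ≤ 1) : (1 / (n:ℝ)) * ∑ j, v j - (1 / (n:ℝ)) * ∑ j, w j ≤ 1 / n := by
  rw [← mul_sub, ← Finset.sum_sub_distrib,
    Finset.sum_eq_single i (fun j _ hj => by rw [h j hj, sub_self]) (by simp)]
  exact mul_le_of_le_one_right (by positivity) hi

theorem stmt_3 {X : Type*} [MeasurableSpace X]
    (DS : Measure X) [IsProbabilityMeasure DS]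
    (fS : X → ℝ) (hfSmeas : Measurable fS) (hfSrange : ∀ x, fS x ∈ Icc (0 : ℝ) 1)
    (H : Set (X → ℝ)) (hHcount : H.Countable) (hHne : H.Nonempty)
    (hmeas : ∀ h ∈ H, Measurable h)
    (hrange : ∀ h ∈ H, ∀ x, h x ∈ Icc (0 : ℝ) 1)
    (n : ℕ) (hn : 1 ≤ n) (δ : ℝ) (hδ : δ ∈ Ioo (0 : ℝ) 1) :
    ENNReal.ofReal (1 - δ) ≤
      (Measure.pi fun _ : Fin n => DS)
        {ω | ∀ h ∈ H,
          ∫ x, |h x - fS x| ∂DS ≤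
            (1 / (n : ℝ)) * ∑ i, |h (ω i) - fS (ω i)| + 2 * radS ω H +
              3 * Real.sqrt (Real.log (2 / δ) / (2 * n))} := by

  obtain ⟨h, rfl⟩ := hHcount.exists_eq_range hHne
  have hm : ∀ k, Measurable (h k) := fun k => hmeas _ ⟨k, rfl⟩
  have hr : ∀ k x, h k x ∈ Icc (0:ℝ) 1 := fun k => hrange _ ⟨k, rfl⟩
  have hn' : (0:ℝ) < n := by exact_mod_cast hn
  set P := Measure.pi fun _ : Fin n => DS with hP
  let L : ℕ → X → ℝ := fun k x => |h k x - fS x|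
  have Lm : ∀ k, Measurable (L k) := fun k => by fun_prop
  have L0 : ∀ k x, 0 ≤ L k x := fun k x => abs_nonneg _
  have L1 : ∀ k x, L k x ≤ 1 := fun k x => abs_le.2 (by
    have := hr k x; have := hfSrange x; simp only [mem_Icc] at *; constructor <;> linarith)
  have Lb : ∀ k x, |L k x| ≤ 1 := fun k x => by rw [abs_of_nonneg (L0 k x)]; exact L1 k x
  have hb : ∀ k x, |h k x| ≤ 1 := fun k x => by rw [abs_of_nonneg (hr k x).1]; exact (hr k x).2
  have avg : ∀ (v : Fin n → ℝ), (∀ i, |v i| ≤ 1) → |(1 / (n:ℝ)) * ∑ i, v i| ≤ 1 := by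
    intro v hv
    rw [abs_mul, abs_of_pos (by positivity : (0:ℝ) < 1 / n)]
    have : |∑ i, v i| ≤ n * 1 := (Finset.abs_sum_le_sum_abs _ _).trans
      ((Finset.sum_le_sum fun i _ => hv i).trans (by simp))
    calc _ ≤ 1 / (n:ℝ) * (n * 1) := by gcongr
      _ = 1 := by field_simp
  have hsgb : ∀ b t, |sg b * t| = |t| := fun b t => by rw [abs_mul, abs_sg, one_mul]
  let S : (ℕ → X → ℝ) → (Fin n → Bool) → (Fin n → X) → ℝ := fun h σ ω =>
    ⨆ k, (1 / (n:ℝ)) * ∑ i, sg (σ i) * h k (ω i)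
  let Rd : (ℕ → X → ℝ) → (Fin n → X) → ℝ := fun h ω => (∑ σ : Fin n → Bool, S h σ ω) / 2 ^ n
  have hrad : ∀ ω : Fin n → X, radS ω (range h) = Rd h ω := by
    intro ω
    simp only [radS, Rd, S, ← range_comp, iSup]
    rfl
  have Sb' : ∀ (h : ℕ → X → ℝ) (_ : ∀ k x, |h k x| ≤ 1) (σ : Fin n → Bool) (ω : Fin n → X) k,
      |(1 / (n:ℝ)) * ∑ i, sg (σ i) * h k (ω i)| ≤ 1 :=
    fun h hb σ ω k => avg _ fun i => by rw [hsgb]; exact hb _ _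
  have Rdm : ∀ (h : ℕ → X → ℝ) (_ : ∀ k, Measurable (h k)), Measurable (Rd h) := fun h hm =>
    (Finset.measurable_sum _ fun σ _ => Measurable.iSup fun k => by fun_prop).div_const _
  have card : ((Finset.univ : Finset (Fin n → Bool)).card : ℝ) = 2 ^ n := by simp
  have Rdb : ∀ (h : ℕ → X → ℝ) (_ : ∀ k x, |h k x| ≤ 1) ω, |Rd h ω| ≤ 1 := by
    intro h hb ω
    simp only [Rd]
    rw [abs_div, abs_of_pos (by positivity : (0:ℝ) < 2^n), div_le_one (by positivity)]
    refine (Finset.abs_sum_le_sum_abs _ _).trans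
      ((Finset.sum_le_sum fun σ _ => abs_ciSup_le (Sb' h hb σ ω)).trans (by simp))
  let Φ : (Fin n → X) → ℝ := fun ω => ⨆ k, (∫ x, L k x ∂DS - (1 / (n:ℝ)) * ∑ i, L k (ω i))
  have Φb' : ∀ (ω : Fin n → X) k, |∫ x, L k x ∂DS - (1 / (n:ℝ)) * ∑ i, L k (ω i)| ≤ 2 := by
    intro ω k
    refine (abs_sub _ _).trans ?_
    have := abs_integral_bdd (μ := DS) (Lb k)
    have := avg (fun i => L k (ω i)) (fun i => Lb k _)
    linarith
  have Φb : ∀ ω, |Φ ω| ≤ 2 := fun ω => abs_ciSup_le (Φb' ω)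
  have Φm : Measurable Φ := Measurable.iSup fun k => by fun_prop
  -- contraction
  have hcontr : ∀ ω, Rd L ω ≤ Rd h ω := by
    intro ω
    simp only [Rd]
    refine div_le_div_of_nonneg_right ?_ (by positivity)
    have := contraction (1 / (n:ℝ)) n 0 (fun _ => 0) (fun k i => (1 / (n:ℝ)) * h k (ω i))
      (fun k i => (1 / (n:ℝ)) * L k (ω i)) (by simp)
      (fun k i => by
        rw [abs_mul, abs_of_pos (by positivity : (0:ℝ) < 1 / n)]
        exact mul_le_of_le_one_right (by positivity) (hb _ _))
      (fun k i => by
        rw [abs_mul, abs_of_pos (by positivity : (0:ℝ) < 1 / n)]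
        exact mul_le_of_le_one_right (by positivity) (Lb _ _))
      (fun k l i => by
        rw [← mul_sub, ← mul_sub, abs_mul, abs_mul]
        refine mul_le_mul_of_nonneg_left ?_ (abs_nonneg _)
        refine (abs_abs_sub_abs_le_abs_sub _ _).trans (le_of_eq ?_)
        congr 1; ring)
    simp only [zero_add, mul_left_comm _ (1 / (n:ℝ)), ← Finset.mul_sum] at this
    exact this
  let G : (Fin n → X) → ℝ := fun ω => Φ ω - 2 * Rd h ω
  have Gm : Measurable G := Φm.sub ((Rdm h hm).const_mul 2)
  have Gb : ∀ ω, |G ω| ≤ 4 := fun ω => by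
    have h1 := abs_le.1 (Φb ω)
    have h2 := abs_le.1 (Rdb h hb ω)
    rw [abs_le]
    simp only [G]
    constructor <;> linarith
  have G0 : ∫ ω, G ω ∂P ≤ 0 := by
    have iR : ∀ (h : ℕ → X → ℝ) (_ : ∀ k, Measurable (h k)) (_ : ∀ k x, |h k x| ≤ 1),
      Integrable (Rd h) P := fun h hm hb => integrable_bdd (Rdm h hm) (Rdb h hb)
    have h1 : ∫ ω, Φ ω ∂P ≤ 2 * ∫ ω, Rd L ω ∂P := symmetrization DS hn L Lm Lb
    have h2 : ∫ ω, Rd L ω ∂P ≤ ∫ ω, Rd h ω ∂P :=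
      integral_mono (iR L Lm Lb) (iR h hm hb) hcontr
    simp only [G]
    rw [integral_sub (integrable_bdd Φm Φb) ((iR h hm hb).const_mul 2), integral_const_mul]
    linarith
  have Gc : ∀ i ω ω', (∀ j, j ≠ i → ω j = ω' j) → G ω - G ω' ≤ 3 / n := by
    intro i ω ω' hω
    have h1 : Φ ω - Φ ω' ≤ 1 / n := by
      refine ciSup_sub_le_aux (bdd_of_abs (Φb' ω')) fun k => ?_
      have := avg_diff (fun j => L k (ω' j)) (fun j => L k (ω j)) i
        (fun j hj => by rw [hω j hj]) (by linarith [L0 k (ω i), L1 k (ω' i)])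
      linarith
    have h2 : Rd h ω' - Rd h ω ≤ 1 / n := by
      simp only [Rd]
      rw [← sub_div, div_le_iff₀ (by positivity), ← Finset.sum_sub_distrib]
      refine (Finset.sum_le_sum (g := fun _ => 1 / (n:ℝ)) fun σ _ => ?_).trans
        (le_of_eq (by simp [mul_comm]))
      refine ciSup_sub_le_aux (bdd_of_abs (Sb' h hb σ ω)) fun k => ?_
      refine avg_diff (fun j => sg (σ j) * h k (ω' j)) (fun j => sg (σ j) * h k (ω j)) i
        (fun j hj => by rw [hω j hj]) ?_
      have a1 := hr k (ω i)
      have a2 := hr k (ω' i)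
      simp only [mem_Icc] at a1 a2
      cases σ i <;> simp only [sg, if_true, Bool.false_eq_true, if_false] <;> linarith
    simp only [G]
    have : (3:ℝ) / n = 1 / n + 2 * (1 / n) := by ring
    linarith
  set t := Real.sqrt (Real.log (2 / δ) / (2 * n)) with ht
  have hlog : 0 ≤ Real.log (2 / δ) := Real.log_nonneg (by
    rw [le_div_iff₀ hδ.1]; linarith [hδ.2])
  have ht2 : t ^ 2 = Real.log (2 / δ) / (2 * n) := Real.sq_sqrt (by positivity)
  have main := mcdiarmid DS (by positivity : (0:ℝ) < 3 / n) hn G Gm Gb Gc G0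
    (t := 3 * t) (by positivity)
  have e : - 2 * (3 * t)^2 / (n * (3 / (n:ℝ))^2) = - Real.log (2 / δ) := by
    rw [mul_pow, ht2]; field_simp
  rw [e, Real.exp_neg, Real.exp_log (by have := hδ.1; positivity)] at main
  have main' : P.real {ω | 3 * t ≤ G ω} ≤ δ := main.trans (by
    rw [inv_div]; linarith [hδ.1])
  have hc : 1 - δ ≤ P.real {ω | 3 * t ≤ G ω}ᶜ := by
    rw [probReal_compl_eq_one_sub (measurableSet_le measurable_const Gm)]
    linarith
  refine (ENNReal.ofReal_le_ofReal hc).trans ?_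
  rw [ofReal_measureReal]
  refine measure_mono fun ω hω => ?_
  simp only [mem_compl_iff, mem_ofPred_eq, not_le] at hω
  rintro _ ⟨k, rfl⟩
  rw [hrad]
  have := le_ciSup (bdd_of_abs (Φb' ω)) k
  have h2 : ∫ x, L k x ∂DS - (1 / (n:ℝ)) * ∑ i, L k (ω i) ≤ Φ ω := this
  simp only [G] at hω
  simp only [L] at h2
  linarith
end

section
/- Let X be a measurable space, D_S and D_T probability measures on X, and f_S, f_T : X → [0,1] measurable labeling functions. Let H be a countable nonempty set of measurable functions from X to [0,1] with f_S, f_T ∈ H, and let H̃ := {x ↦ sgn(|g(x) − g'(x)| − t) : g, g' ∈ H, t ∈ [0,1]} (a class of {0,1}-valued functions, assumed to admit measurable suprema, e.g. by restricting t to rationals). Fix n ≥ 1 and δ ∈ (0,1). Then with probability at least 1 − δ over independent i.i.d. samples S_S ∼ D_S^n and S_T ∼ D_T^n, for every h ∈ H: ε_{D_T}(h, f_T) ≤ ε̂_{S_S}(h, f_S) + d_{H̃}(D̂_S, D̂_T) + 2·Rad_{S_S}(H) + 2·Rad_{S_S}(H̃) + 2·Rad_{S_T}(H̃) + min{ E_{D_S}[|f_S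 − f_T|], E_{D_T}[|f_S − f_T|] } + 3·√(log(4/δ)/(2n)) + 6·√(log(8/δ)/(2n)), where ε̂_{S_S}(h,f_S) := (1/n)·Σ_i |h(x_i) − f_S(x_i)| and D̂_S, D̂_T are the empirical distributions of the two samples. -/
open MeasureTheory Set
open scoped ENNReal

/-- The H-divergence induced by a class `H` of `{0,1}`-valued functions:
`d_H(P,Q) := sup_{h ∈ H} |P({x : h(x) = 1}) − Q({x : h(x) = 1})|`. -/
noncomputable def dH {X : Type*} [MeasurableSpace X] (H : Set (X → ℝ))
    (P Q : Measure X) : ℝ :=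
  sSup ((fun h => |(P {x | h x = 1}).toReal - (Q {x | h x = 1}).toReal|) '' H)

/-- The empirical distribution of the sample `ω = (x_1, …, x_n)`: the uniform
measure on the sample points. -/
noncomputable def empD {X : Type*} [MeasurableSpace X] {n : ℕ} (ω : Fin n → X) : Measure X :=
  ((n : ℝ≥0∞))⁻¹ • ∑ i, Measure.dirac (ω i)

/-- The class `H̃ := {x ↦ sgn(|g(x) − g'(x)| − t) : g, g' ∈ H, t ∈ [0,1]}` of
`{0,1}`-valued functions, where `sgn(s) = 1` if `s > 0` and `0` otherwise. -/
def Htilde {X : Type*} (H : Set (X → ℝ)) : Set (X → ℝ) :=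
  {u | ∃ g ∈ H, ∃ g' ∈ H, ∃ t ∈ Icc (0 : ℝ) 1,
    u = fun x => if t < |g x - g' x| then (1 : ℝ) else 0}


lemma aux_integrable {Ω : Type*} [MeasurableSpace Ω] {μ : Measure Ω} [IsFiniteMeasure μ]
    {f : Ω → ℝ} (hf : Measurable f) {B : ℝ} (hB : ∀ x, |f x| ≤ B) : Integrable f μ :=
  Integrable.of_bound hf.aestronglyMeasurable B (Filter.Eventually.of_forall fun x => hB x)

lemma aux_hoeffding {X : Type*} [MeasurableSpace X] (μ : Measure X) [IsProbabilityMeasure μ]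
    (g : X → ℝ) (hg : Measurable g) (c : ℝ) (B : ℝ) (hB : ∀ x, |g x| ≤ B)
    (hd : ∀ a b, g a ≤ g b + c) (s : ℝ) :
    ∫ a, Real.exp (s * g a) ∂μ ≤ Real.exp (s * ∫ a, g a ∂μ + s ^ 2 * c ^ 2 / 8) := by
  have hne : Nonempty X := nonempty_of_isProbabilityMeasure μ
  have hbb : BddBelow (range g) := ⟨-B, by rintro _ ⟨x, rfl⟩; exact (abs_le.1 (hB x)).1⟩
  have h1 := ProbabilityTheory.hasSubgaussianMGF_of_mem_Icc (μ := μ) (X := g) (a := ⨅ x, g x)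
    (b := (⨅ x, g x) + c) hg.aemeasurable (Filter.Eventually.of_forall fun x =>
      ⟨ciInf_le hbb x, by
        have : g x - c ≤ ⨅ x, g x := le_ciInf fun y => by linarith [hd x y]
        linarith⟩)
  have h2 := h1.mgf_le s
  unfold ProbabilityTheory.mgf at h2
  have h3 : ∀ a, Real.exp (s * g a) = Real.exp (s * ∫ a, g a ∂μ) * Real.exp (s * (g a - ∫ a, g a ∂μ)) := by
    intro a; rw [← Real.exp_add]; congr 1; ring
  simp_rw [h3]
  rw [integral_const_mul, Real.exp_add]
  refine mul_le_mul_of_nonneg_left (h2.trans (le_of_eq ?_)) (Real.exp_pos _).le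
  congr 1
  simp only [add_sub_cancel_left, NNReal.coe_pow, NNReal.coe_div, coe_nnnorm, Real.norm_eq_abs,
    NNReal.coe_ofNat, div_pow, sq_abs]
  ring

lemma aux_mcd {X : Type*} [MeasurableSpace X] (μ : Measure X) [IsProbabilityMeasure μ]
    (c s : ℝ) : ∀ (n : ℕ) (G : (Fin n → X) → ℝ), Measurable G → ∀ B, (∀ x, |G x| ≤ B) →
    (∀ x k y, G (Function.update x k y) ≤ G x + c) →
    ∫ x, Real.exp (s * G x) ∂(Measure.pi fun _ : Fin n => μ) ≤
      Real.exp (s * ∫ x, G x ∂(Measure.pi fun _ : Fin n => μ) + n * (s ^ 2 * c ^ 2 / 8)) := by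
  intro n
  induction n with
  | zero =>
    intro G hG B hB hd
    have : ∀ x, G x = G default := fun x => by rw [Subsingleton.elim x default]
    simp_rw [this]
    simp
  | succ n ih =>
    intro G hG B hB hd
    have mp := (measurePreserving_piFinSuccAbove (fun _ : Fin (n+1) => μ) 0).symm
    set e := (MeasurableEquiv.piFinSuccAbove (fun _ : Fin (n+1) => X) 0).symm with he
    have hecons : ∀ p, e p = Fin.cons p.1 p.2 := fun p => by
      simp [he, MeasurableEquiv.piFinSuccAbove, Fin.insertNthEquiv]
    have hmG : Measurable (fun p : X × (Fin n → X) => G (e p)) := hG.comp e.measurable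
    have hexpB : ∀ x, |Real.exp (s * G x)| ≤ Real.exp (|s| * B) := fun x => by
      rw [Real.abs_exp]
      apply Real.exp_le_exp.2
      calc s * G x ≤ |s * G x| := le_abs_self _
        _ = |s| * |G x| := abs_mul _ _
        _ ≤ _ := mul_le_mul_of_nonneg_left (hB x) (abs_nonneg _)
    have hmE : Measurable (fun p : X × (Fin n → X) => Real.exp (s * G (e p))) :=
      (hmG.const_mul s).exp
    have i1 : ∫ x, Real.exp (s * G x) ∂(Measure.pi fun _ : Fin (n+1) => μ) =
        ∫ a, ∫ x, Real.exp (s * G (e (a, x))) ∂(Measure.pi fun _ : Fin n => μ) ∂μ := by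
      rw [← mp.integral_comp' (g := fun x => Real.exp (s * G x)), integral_prod]
      exact aux_integrable hmE (fun p => hexpB _)
    have i2 : ∫ x, G x ∂(Measure.pi fun _ : Fin (n+1) => μ) =
        ∫ a, ∫ x, G (e (a, x)) ∂(Measure.pi fun _ : Fin n => μ) ∂μ := by
      rw [← mp.integral_comp' (g := fun x => G x), integral_prod]
      exact aux_integrable hmG (fun p => hB _)
    set g : X → ℝ := fun a => ∫ x, G (e (a, x)) ∂(Measure.pi fun _ : Fin n => μ) with hgdef
    have hint : ∀ a, Integrable (fun x => G (e (a, x))) (Measure.pi fun _ : Fin n => μ) :=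
      fun a => aux_integrable (hmG.comp measurable_prodMk_left) (fun p => hB _)
    have hgm : Measurable g := (hmG.stronglyMeasurable.integral_prod_right').measurable
    have hgB : ∀ a, |g a| ≤ B := fun a => by
      have := norm_integral_le_of_norm_le_const (μ := Measure.pi fun _ : Fin n => μ)
        (f := fun x => G (e (a, x))) (C := B) (Filter.Eventually.of_forall fun x => hB _)
      simpa using this
    have hgd : ∀ a b, g a ≤ g b + c := fun a b => by
      have : g b + c = ∫ x, (G (e (b, x)) + c) ∂(Measure.pi fun _ : Fin n => μ) := by
        rw [integral_add (hint b) (integrable_const c)]; simp [hgdef]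
      rw [this]
      refine integral_mono (hint a) ((hint b).add (integrable_const c)) fun x => ?_
      have := hd (e (b, x)) 0 a
      rw [hecons, Fin.update_cons_zero] at this
      simpa [hecons] using this
    rw [i1, i2]
    calc _ ≤ ∫ a, Real.exp (s * g a) * Real.exp (n * (s ^ 2 * c ^ 2 / 8)) ∂μ := by
          refine integral_mono ?_ ?_ fun a => ?_
          · exact (aux_integrable hmE (fun p => hexpB _)).integral_prod_left (μ := μ) (ν := Measure.pi fun _ : Fin n => μ)
          · refine Integrable.mul_const (aux_integrable (B := Real.exp (|s| * B)) (hgm.const_mul s).exp fun a => ?_) _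
            rw [Real.abs_exp]
            apply Real.exp_le_exp.2
            calc s * g a ≤ |s * g a| := le_abs_self _
              _ = |s| * |g a| := abs_mul _ _
              _ ≤ _ := mul_le_mul_of_nonneg_left (hgB a) (abs_nonneg _)
          · rw [← Real.exp_add]
            refine ih (fun x => G (e (a, x))) (hmG.comp measurable_prodMk_left) B (fun _ => hB _) ?_
            intro x k y
            have := hd (e (a, x)) k.succ y
            rw [hecons, ← Fin.cons_update] at this
            simpa [hecons] using this
      _ ≤ _ := by
          rw [integral_mul_const]
          refine (mul_le_mul_of_nonneg_right (aux_hoeffding μ g hgm c B hgB hgd s) (Real.exp_pos _).le).trans (le_of_eq ?_)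
          rw [← Real.exp_add]; congr 1; push_cast; ring

lemma aux_tail {X : Type*} [MeasurableSpace X] (μ : Measure X) [IsProbabilityMeasure μ]
    (n : ℕ) (hn : 1 ≤ n) (G : (Fin n → X) → ℝ) (hG : Measurable G) (B : ℝ) (hB : ∀ x, |G x| ≤ B)
    (c : ℝ) (hc : 0 < c)
    (hd : ∀ x k y, G (Function.update x k y) ≤ G x + c / n)
    (hE : ∫ x, G x ∂(Measure.pi fun _ : Fin n => μ) ≤ 0) (δ : ℝ) (h0 : 0 < δ) (h1 : δ < 1) :
    (Measure.pi fun _ : Fin n => μ) {x | c * Real.sqrt (Real.log (1 / δ) / (2 * n)) < G x}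
      ≤ ENNReal.ofReal δ := by
  have hn' : (0:ℝ) < n := by exact_mod_cast hn
  set P := (Measure.pi fun _ : Fin n => μ)
  have hL : 0 < Real.log (1 / δ) := Real.log_pos (by rw [lt_div_iff₀ h0]; linarith)
  set r := Real.sqrt (Real.log (1 / δ) / (2 * n)) with hr
  have hr2 : r ^ 2 = Real.log (1 / δ) / (2 * n) := Real.sq_sqrt (by positivity)
  set s := 4 * n * r / c with hs
  have hs0 : 0 ≤ s := by positivity
  have hint : Integrable (fun x => Real.exp (s * G x)) P :=
    aux_integrable (B := Real.exp (s * B)) (hG.const_mul s).exp fun x => by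
      rw [Real.abs_exp]
      exact Real.exp_le_exp.2 (mul_le_mul_of_nonneg_left ((le_abs_self _).trans (hB x)) hs0)
  have h2 := ProbabilityTheory.measure_ge_le_exp_mul_mgf (μ := P) (X := G) (c * r) hs0 hint
  have h3 := aux_mcd μ (c / n) s n G hG B hB hd
  have h4 : P.real {x | c * r ≤ G x} ≤ δ := by
    refine h2.trans ?_
    unfold ProbabilityTheory.mgf
    refine (mul_le_mul_of_nonneg_left h3 (Real.exp_pos _).le).trans ?_
    rw [← Real.exp_add]
    have : δ = Real.exp (- Real.log (1 / δ)) := by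
      rw [one_div, Real.log_inv, neg_neg, Real.exp_log h0]
    rw [this]
    apply Real.exp_le_exp.2
    have e1 : s * ∫ x, G x ∂P ≤ 0 := mul_nonpos_of_nonneg_of_nonpos hs0 hE
    have e2 : -s * (c * r) + n * (s ^ 2 * (c / n) ^ 2 / 8) = - (2 * n * r ^ 2) := by
      rw [hs]; field_simp; ring
    have e3 : 2 * n * r ^ 2 = Real.log (1 / δ) := by rw [hr2]; field_simp
    linarith
  calc P {x | c * r < G x} ≤ P {x | c * r ≤ G x} := measure_mono fun x (hx : c * r < G x) => (le_of_lt hx : c * r ≤ G x)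
    _ = ENNReal.ofReal (P.real {x | c * r ≤ G x}) := by simp
    _ ≤ _ := ENNReal.ofReal_le_ofReal h4

/-- Supremum part of the empirical Rademacher complexity, indexed version. -/
noncomputable def auxRf {X ι : Type*} {n : ℕ} (f : ι → X → ℝ) (x : Fin n → X) (σ : Fin n → Bool) : ℝ :=
  ⨆ i, (1 / (n : ℝ)) * ∑ j, (if σ j then (1 : ℝ) else -1) * f i (x j)

lemma aux_radS_eq {X ι : Type*} {n : ℕ} (f : ι → X → ℝ) (x : Fin n → X) :
    radS x (range f) = (∑ σ, auxRf f x σ) / 2 ^ n := by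
  unfold radS auxRf
  congr 1
  refine Finset.sum_congr rfl fun σ _ => ?_
  rw [← range_comp]; rfl

lemma aux_avg {n : ℕ} (a : Fin n → ℝ) (ha : ∀ j, |a j| ≤ 1) : |(1 / (n : ℝ)) * ∑ j, a j| ≤ 1 := by
  rcases Nat.eq_zero_or_pos n with rfl | hn
  · simp
  have hn' : (0:ℝ) < n := by exact_mod_cast hn
  rw [abs_mul, abs_of_pos (by positivity : 0 < 1 / (n:ℝ)), one_div, inv_mul_le_iff₀ hn']
  calc |∑ j, a j| ≤ ∑ j, |a j| := Finset.abs_sum_le_sum_abs _ _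
    _ ≤ ∑ j : Fin n, (1:ℝ) := Finset.sum_le_sum fun j _ => ha j
    _ = _ := by simp

lemma aux_sgn (b : Bool) (a : ℝ) (ha : a ∈ Icc (0:ℝ) 1) : |(if b then (1 : ℝ) else -1) * a| ≤ 1 := by
  rw [abs_le]; obtain ⟨h1, h2⟩ := ha; cases b <;> simp <;> constructor <;> linarith

lemma aux_coord {X : Type*} {n : ℕ} (φ : Fin n → X → ℝ) (hφ : ∀ k y z, φ k y - φ k z ≤ 1)
    (x : Fin n → X) (k : Fin n) (y : X) :
    (1 / (n : ℝ)) * ∑ j, φ j (Function.update x k y j) ≤ (1 / (n : ℝ)) * ∑ j, φ j (x j) + 1 / n := by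
  have h : ∑ j, φ j (Function.update x k y j) ≤ ∑ j, φ j (x j) + 1 := by
    rw [← Finset.add_sum_erase _ _ (Finset.mem_univ k), ← Finset.add_sum_erase _ (fun j => φ j (x j)) (Finset.mem_univ k)]
    have : ∑ j ∈ Finset.univ.erase k, φ j (Function.update x k y j) = ∑ j ∈ Finset.univ.erase k, φ j (x j) :=
      Finset.sum_congr rfl fun j hj => by rw [Function.update_of_ne (Finset.ne_of_mem_erase hj)]
    rw [this, Function.update_self]
    linarith [hφ k y (x k)]
  have h0 : 0 ≤ 1 / (n:ℝ) := by positivity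
  nlinarith [mul_le_mul_of_nonneg_left h h0]

lemma aux_iSup {ι : Type*} [Nonempty ι] (u v : ι → ℝ) (c B : ℝ) (hv : ∀ i, |v i| ≤ B) (h : ∀ i, u i ≤ v i + c) :
    ⨆ i, u i ≤ (⨆ i, v i) + c :=
  ciSup_le fun i => (h i).trans (by
    have := le_ciSup (f := v) ⟨B, by rintro _ ⟨j, rfl⟩; exact (le_abs_self _).trans (hv j)⟩ i
    linarith)

lemma aux_iSup_abs {ι : Type*} [Nonempty ι] (v : ι → ℝ) (B : ℝ) (hv : ∀ i, |v i| ≤ B) :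
    |⨆ i, v i| ≤ B := by
  rw [abs_le]
  constructor
  · obtain ⟨i⟩ := ‹Nonempty ι›
    have := le_ciSup (f := v) ⟨B, by rintro _ ⟨j, rfl⟩; exact (le_abs_self _).trans (hv j)⟩ i
    linarith [(abs_le.1 (hv i)).1]
  · exact ciSup_le fun i => (le_abs_self _).trans (hv i)

lemma auxRf_coord {X ι : Type*} [Nonempty ι] {n : ℕ}
    (f : ι → X → ℝ) (hfr : ∀ i x, f i x ∈ Icc (0:ℝ) 1) (σ : Fin n → Bool) (x : Fin n → X) (k : Fin n) (y : X) :
    auxRf f (Function.update x k y) σ ≤ auxRf f x σ + 1 / n := by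
  refine aux_iSup _ _ _ 1 (fun i => aux_avg _ fun j => aux_sgn _ _ (hfr _ _)) fun i => ?_
  refine aux_coord (fun j z => (if σ j then (1 : ℝ) else -1) * f i z) (fun k y z => ?_) x k y
  obtain ⟨h1, h2⟩ := hfr i y
  obtain ⟨h3, h4⟩ := hfr i z
  by_cases h : σ k <;> simp [h] <;> linarith

lemma auxRf_abs {X ι : Type*} [Nonempty ι] {n : ℕ}
    (f : ι → X → ℝ) (hfr : ∀ i x, f i x ∈ Icc (0:ℝ) 1) (σ : Fin n → Bool) (x : Fin n → X) :
    |auxRf f x σ| ≤ 1 :=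
  aux_iSup_abs _ _ (fun i => aux_avg _ fun j => aux_sgn _ _ (hfr _ _))

lemma auxRf_meas {X ι : Type*} [MeasurableSpace X] [Countable ι] {n : ℕ}
    (f : ι → X → ℝ) (hfm : ∀ i, Measurable (f i)) (σ : Fin n → Bool) : Measurable (fun x : Fin n → X => auxRf f x σ) := by
  unfold auxRf
  refine Measurable.iSup fun i => ?_
  refine Measurable.const_mul (Finset.measurable_sum _ fun j _ => ?_) _
  exact ((hfm i).comp (measurable_pi_apply j)).const_mul _

/-- symmetrization -/
lemma aux_symm {X ι : Type*} [MeasurableSpace X] [Nonempty ι] [Countable ι]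
    (f : ι → X → ℝ) (hfm : ∀ i, Measurable (f i)) (hfr : ∀ i x, f i x ∈ Icc (0:ℝ) 1)
    (μ : Measure X) [IsProbabilityMeasure μ] (n : ℕ) (hn : 1 ≤ n) :
    ∫ x, (⨆ i, (∫ z, f i z ∂μ - (1 / (n : ℝ)) * ∑ j, f i (x j))) ∂(Measure.pi fun _ : Fin n => μ)
      ≤ 2 * ∫ x, radS x (range f) ∂(Measure.pi fun _ : Fin n => μ) := by
  have hn' : (0:ℝ) < n := by exact_mod_cast hn
  set P := (Measure.pi fun _ : Fin n => μ) with hP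
  -- bounds
  have hdiff : ∀ i y z, |f i y - f i z| ≤ 1 := fun i y z => by
    obtain ⟨h1, h2⟩ := hfr i y
    obtain ⟨h3, h4⟩ := hfr i z
    rw [abs_le]; constructor <;> linarith
  let W : (Fin n → X) × (Fin n → X) → ℝ := fun p =>
    ⨆ i, (1 / (n : ℝ)) * ∑ j, (f i (p.2 j) - f i (p.1 j))
  have hWb0 : ∀ p : (Fin n → X) × (Fin n → X), ∀ i, |(1 / (n : ℝ)) * ∑ j, (f i (p.2 j) - f i (p.1 j))| ≤ 1 :=
    fun p i => aux_avg _ fun j => hdiff _ _ _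
  have hWb : ∀ p, |W p| ≤ 1 := fun p => aux_iSup_abs _ _ (hWb0 p)
  have hWle : ∀ p i, (1 / (n : ℝ)) * ∑ j, (f i (p.2 j) - f i (p.1 j)) ≤ W p := fun p i =>
    le_ciSup (f := fun i => (1 / (n : ℝ)) * ∑ j, (f i (p.2 j) - f i (p.1 j)))
      ⟨1, by rintro _ ⟨i, rfl⟩; exact (le_abs_self _).trans (hWb0 p i)⟩ i
  have hterm : ∀ i, Measurable fun p : (Fin n → X) × (Fin n → X) =>
      (1 / (n : ℝ)) * ∑ j, (f i (p.2 j) - f i (p.1 j)) := fun i =>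
    Measurable.const_mul (Finset.measurable_sum _ fun j _ =>
      ((hfm i).comp ((measurable_pi_apply j).comp measurable_snd)).sub
      ((hfm i).comp ((measurable_pi_apply j).comp measurable_fst))) _
  have hWm : Measurable W := Measurable.iSup hterm
  have hWi : Integrable W (P.prod P) := aux_integrable hWm hWb
  have hfi : ∀ i, Integrable (f i) μ := fun i => aux_integrable (B := 1) (hfm i) fun x => by
    rw [abs_le]; have := hfr i x; constructor <;> linarith [this.1, this.2]
  have hmean : ∀ i, ∫ z, f i z ∂μ ∈ Icc (0:ℝ) 1 := fun i => by
    constructor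
    · exact integral_nonneg fun x => (hfr i x).1
    · have := integral_mono (hfi i) (integrable_const (1:ℝ)) fun x => (hfr i x).2
      simpa using this
  -- step 1
  have step1 : ∫ x, (⨆ i, (∫ z, f i z ∂μ - (1 / (n : ℝ)) * ∑ j, f i (x j))) ∂P ≤ ∫ p, W p ∂(P.prod P) := by
    rw [integral_prod _ hWi]
    refine integral_mono ?_ hWi.integral_prod_left fun x => ?_
    · refine aux_integrable (B := 1) ?_ fun x => aux_iSup_abs _ _ fun i => ?_
      · refine Measurable.iSup fun i => Measurable.const_sub (Measurable.const_mul (Finset.measurable_sum _ fun j _ => ?_) _) _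
        exact (hfm i).comp (measurable_pi_apply j)
      · have h1 : (1 / (n : ℝ)) * ∑ j, (∫ z, f i z ∂μ - f i (x j)) = ∫ z, f i z ∂μ - (1 / (n : ℝ)) * ∑ j, f i (x j) := by
          rw [Finset.sum_sub_distrib]; simp; field_simp
        rw [← h1]
        refine aux_avg _ fun j => ?_
        obtain ⟨h3, h4⟩ := hfr i (x j)
        obtain ⟨h5, h6⟩ := hmean i
        rw [abs_le]; constructor <;> linarith
    · refine ciSup_le fun i => ?_
      have hi : ∀ j : Fin n, Integrable (fun y : Fin n → X => f i (y j)) P := fun j =>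
        aux_integrable (B := 1) ((hfm i).comp (measurable_pi_apply j)) fun y => by
          rw [abs_le]; have := hfr i (y j); constructor <;> linarith [this.1, this.2]
      have hij : ∀ j : Fin n, ∫ y : Fin n → X, f i (y j) ∂P = ∫ z, f i z ∂μ := fun j => by
        have mp := measurePreserving_eval (fun _ : Fin n => μ) j
        rw [← mp.map_eq, integral_map mp.measurable.aemeasurable (hfm i).aestronglyMeasurable]
      have e1 : ∫ z, f i z ∂μ - (1 / (n : ℝ)) * ∑ j, f i (x j) =
          ∫ y, (1 / (n : ℝ)) * ∑ j, (f i (y j) - f i (x j)) ∂P := by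
        rw [integral_const_mul, integral_finsetSum (f := fun j (y : Fin n → X) => f i (y j) - f i (x j)) _
          fun j _ => (hi j).sub (integrable_const _)]
        have : ∀ j : Fin n, ∫ y, (f i (y j) - f i (x j)) ∂P = ∫ z, f i z ∂μ - f i (x j) := fun j => by
          rw [integral_sub (hi j) (integrable_const _), hij]; simp
        simp_rw [this]
        rw [Finset.sum_sub_distrib]; simp; field_simp
      rw [e1]
      refine integral_mono ?_ ?_ fun y => hWle (x, y) i
      · exact aux_integrable ((hterm i).comp measurable_prodMk_left) fun y => hWb0 (x, y) i
      · exact aux_integrable (hWm.comp measurable_prodMk_left) fun y => hWb (x, y)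
  -- step 2
  have hRi : ∀ σ, Integrable (fun x : Fin n → X => auxRf f x σ) P := fun σ =>
    aux_integrable (auxRf_meas f hfm σ) fun x => auxRf_abs f hfr σ x
  have step2 : ∀ σ : Fin n → Bool, ∫ p, W p ∂(P.prod P) ≤
      ∫ x, auxRf f x σ ∂P + ∫ x, auxRf f x (fun j => !σ j) ∂P := by
    intro σ
    have mpe := measurePreserving_arrowProdEquivProdArrow X X (Fin n) (fun _ => μ) (fun _ => μ)
    set e := MeasurableEquiv.arrowProdEquivProdArrow X X (Fin n) with he
    have mpT : MeasurePreserving (fun (z : Fin n → X × X) j => (if σ j then id else Prod.swap) (z j))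
        (Measure.pi fun _ : Fin n => μ.prod μ) (Measure.pi fun _ : Fin n => μ.prod μ) := by
      refine measurePreserving_pi (fun _ : Fin n => μ.prod μ) (fun _ : Fin n => μ.prod μ)
        (f := fun j => (if σ j then id else Prod.swap)) fun j => ?_
      by_cases h : σ j
      · simpa [h] using MeasurePreserving.id _
      · simpa [h] using Measure.measurePreserving_swap
    have mp := mpe.comp (mpT.comp (mpe.symm))
    have e1 : ∫ p, W p ∂(P.prod P) = ∫ p, W (e ((fun (z : Fin n → X × X) j => (if σ j then id else Prod.swap) (z j)) (e.symm p))) ∂(P.prod P) := by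
      conv_lhs => rw [← mp.map_eq]
      rw [integral_map mp.measurable.aemeasurable hWm.aestronglyMeasurable]
      rfl
    have e2 : ∀ p, W (e ((fun (z : Fin n → X × X) j => (if σ j then id else Prod.swap) (z j)) (e.symm p))) ≤
        auxRf f p.2 σ + auxRf f p.1 (fun j => !σ j) := by
      intro p
      refine ciSup_le fun i => ?_
      have hb : ∀ (x : Fin n → X) τ, (1 / (n : ℝ)) * ∑ j, (if τ j then (1 : ℝ) else -1) * f i (x j) ≤ auxRf f x τ := fun x τ =>
        le_ciSup (f := fun i => (1 / (n : ℝ)) * ∑ j, (if τ j then (1 : ℝ) else -1) * f i (x j))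
          ⟨1, by rintro _ ⟨i, rfl⟩; exact (le_abs_self _).trans (aux_avg _ fun j => aux_sgn _ _ (hfr _ _))⟩ i
      refine le_trans (le_of_eq ?_) (add_le_add (hb p.2 σ) (hb p.1 (fun j => !σ j)))
      rw [← mul_add, ← Finset.sum_add_distrib]
      congr 1
      refine Finset.sum_congr rfl fun j _ => ?_
      have q1 : (e ((fun (z : Fin n → X × X) j => (if σ j then id else Prod.swap) (z j)) (e.symm p))).1 j
          = ((if σ j then id else Prod.swap) (p.1 j, p.2 j)).1 := rfl
      have q2 : (e ((fun (z : Fin n → X × X) j => (if σ j then id else Prod.swap) (z j)) (e.symm p))).2 j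
          = ((if σ j then id else Prod.swap) (p.1 j, p.2 j)).2 := rfl
      rw [q1, q2]
      by_cases h : σ j <;> simp [h] <;> ring
    rw [e1]
    have i1 : Integrable (fun p : (Fin n → X) × (Fin n → X) => auxRf f p.2 σ) (P.prod P) :=
      aux_integrable ((auxRf_meas f hfm σ).comp measurable_snd) fun x => auxRf_abs f hfr σ _
    have i2 : Integrable (fun p : (Fin n → X) × (Fin n → X) => auxRf f p.1 (fun j => !σ j)) (P.prod P) :=
      aux_integrable ((auxRf_meas f hfm _).comp measurable_fst) fun x => auxRf_abs f hfr _ _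
    have k1 : ∫ p : (Fin n → X) × (Fin n → X), auxRf f p.2 σ ∂(P.prod P) = ∫ x, auxRf f x σ ∂P := by
      rw [integral_prod _ i1]; simp
    have k2 : ∫ p : (Fin n → X) × (Fin n → X), auxRf f p.1 (fun j => !σ j) ∂(P.prod P) = ∫ x, auxRf f x (fun j => !σ j) ∂P := by
      rw [integral_prod _ i2]; simp
    rw [← k1, ← k2, ← integral_add i1 i2]
    refine integral_mono ?_ (i1.add i2) e2
    exact aux_integrable (hWm.comp mp.measurable) fun p => hWb _
  -- step 3
  have step3 : ∫ x, radS x (range f) ∂P = (∑ σ, ∫ x, auxRf f x σ ∂P) / 2 ^ n := by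
    simp_rw [aux_radS_eq]
    rw [integral_div, integral_finsetSum _ fun σ _ => hRi σ]
  have step4 : ∑ σ : Fin n → Bool, ∫ x, auxRf f x (fun j => !σ j) ∂P = ∑ σ, ∫ x, auxRf f x σ ∂P := by
    refine Fintype.sum_equiv (Function.Involutive.toPerm (fun (σ : Fin n → Bool) j => !σ j)
      (fun σ => by simp)) _ _ fun σ => rfl
  refine step1.trans ?_
  have h5 := Finset.sum_le_sum (s := Finset.univ) fun σ _ => step2 σ
  rw [Finset.sum_add_distrib, step4] at h5
  simp only [Finset.sum_const, Finset.card_univ, Fintype.card_fun, Fintype.card_bool, Fintype.card_fin, nsmul_eq_mul] at h5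
  push_cast at h5
  rw [step3]
  have h2 : (0:ℝ) < 2 ^ n := by positivity
  rw [← mul_div_assoc, le_div_iff₀ h2]
  linarith

lemma aux_unif {X ι : Type*} [MeasurableSpace X] [Nonempty ι] [Countable ι]
    (f : ι → X → ℝ) (hfm : ∀ i, Measurable (f i)) (hfr : ∀ i x, f i x ∈ Icc (0:ℝ) 1)
    (μ : Measure X) [IsProbabilityMeasure μ] (n : ℕ) (hn : 1 ≤ n) (δ : ℝ) (h0 : 0 < δ) (h1 : δ < 1) :
    (Measure.pi fun _ : Fin n => μ) {x | ∃ i, (1 / (n : ℝ)) * ∑ j, f i (x j) + 2 * radS x (range f)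
        + 3 * Real.sqrt (Real.log (1 / δ) / (2 * n)) < ∫ z, f i z ∂μ} ≤ ENNReal.ofReal δ := by
  have hn' : (0:ℝ) < n := by exact_mod_cast hn
  set P := (Measure.pi fun _ : Fin n => μ) with hP
  have hfi : ∀ i, Integrable (f i) μ := fun i => aux_integrable (B := 1) (hfm i) fun x => by
    rw [abs_le]; have := hfr i x; constructor <;> linarith [this.1, this.2]
  have hmean : ∀ i, ∫ z, f i z ∂μ ∈ Icc (0:ℝ) 1 := fun i => by
    constructor
    · exact integral_nonneg fun x => (hfr i x).1
    · have := integral_mono (hfi i) (integrable_const (1:ℝ)) fun x => (hfr i x).2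
      simpa using this
  have hform : ∀ (x : Fin n → X) i, (1 / (n : ℝ)) * ∑ j, (∫ z, f i z ∂μ - f i (x j)) = ∫ z, f i z ∂μ - (1 / (n : ℝ)) * ∑ j, f i (x j) := fun x i => by
    rw [Finset.sum_sub_distrib]; simp; field_simp
  have hb0 : ∀ (x : Fin n → X) i, |∫ z, f i z ∂μ - (1 / (n : ℝ)) * ∑ j, f i (x j)| ≤ 1 := fun x i => by
    rw [← hform]
    refine aux_avg _ fun j => ?_
    obtain ⟨h3, h4⟩ := hfr i (x j)
    obtain ⟨h5, h6⟩ := hmean i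
    rw [abs_le]; constructor <;> linarith
  let Φ : (Fin n → X) → ℝ := fun x => ⨆ i, (∫ z, f i z ∂μ - (1 / (n : ℝ)) * ∑ j, f i (x j))
  have hΦm : Measurable Φ := by
    refine Measurable.iSup fun i => Measurable.const_sub (Measurable.const_mul (Finset.measurable_sum _ fun j _ => ?_) _) _
    exact (hfm i).comp (measurable_pi_apply j)
  have hΦb : ∀ x, |Φ x| ≤ 1 := fun x => aux_iSup_abs _ _ (hb0 x)
  have hΦd : ∀ x k y, Φ (Function.update x k y) ≤ Φ x + 1 / n := fun x k y => by
    refine aux_iSup _ _ _ 1 (hb0 x) fun i => ?_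
    rw [← hform, ← hform]
    refine aux_coord (fun _ z => ∫ z, f i z ∂μ - f i z) (fun k y z => ?_) x k y
    have h3 := (hfr i y).1
    have h4 := (hfr i z).2
    linarith
  have hRm : Measurable fun x : Fin n → X => radS x (range f) := by
    simp_rw [aux_radS_eq]
    exact (Finset.measurable_sum _ fun σ _ => auxRf_meas f hfm σ).div_const _
  have h2 : (0:ℝ) < 2 ^ n := by positivity
  have hRb : ∀ x : Fin n → X, |radS x (range f)| ≤ 1 := fun x => by
    rw [aux_radS_eq, abs_div, abs_of_pos h2, div_le_one h2]
    calc _ ≤ ∑ σ, |auxRf f x σ| := Finset.abs_sum_le_sum_abs _ _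
      _ ≤ ∑ σ : Fin n → Bool, (1:ℝ) := Finset.sum_le_sum fun σ _ => auxRf_abs f hfr σ x
      _ = _ := by simp
  have hRd : ∀ (x : Fin n → X) k y, radS (Function.update x k y) (range f) ≤ radS x (range f) + 1 / n := fun x k y => by
    rw [aux_radS_eq, aux_radS_eq, div_add' _ _ _ h2.ne']
    refine div_le_div_of_nonneg_right ?_ h2.le
    have := Finset.sum_le_sum (s := Finset.univ) fun σ _ => auxRf_coord f hfr σ x k y
    rw [Finset.sum_add_distrib] at this
    simp only [Finset.sum_const, Finset.card_univ, Fintype.card_fun, Fintype.card_bool, Fintype.card_fin, nsmul_eq_mul] at this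
    push_cast at this
    linarith
  have hRd' : ∀ (x : Fin n → X) k y, radS x (range f) ≤ radS (Function.update x k y) (range f) + 1 / n := fun x k y => by
    have := hRd (Function.update x k y) k (x k)
    simpa using this
  have key := aux_tail μ n hn (fun x => Φ x - 2 * radS x (range f)) (hΦm.sub (hRm.const_mul 2)) 3
    (fun x => by
      have a1 := abs_le.1 (hΦb x)
      have a2 := abs_le.1 (hRb x)
      rw [abs_le]; constructor <;> linarith [a1.1, a1.2, a2.1, a2.2])
    3 (by norm_num) (fun x k y => by
      have a1 := hΦd x k y
      have a2 := hRd' x k y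
      have : (3:ℝ) / n = 3 * (1 / n) := by ring
      rw [this]; linarith)
    (by
      rw [integral_sub (aux_integrable hΦm hΦb) ((aux_integrable hRm hRb).const_mul 2), integral_const_mul]
      have := aux_symm f hfm hfr μ n hn
      linarith) δ h0 h1
  refine le_trans (measure_mono ?_) key
  rintro x ⟨i, hi⟩
  have : ∫ z, f i z ∂μ - (1 / (n : ℝ)) * ∑ j, f i (x j) ≤ Φ x :=
    le_ciSup (f := fun i => ∫ z, f i z ∂μ - (1 / (n : ℝ)) * ∑ j, f i (x j))
      ⟨1, by rintro _ ⟨i, rfl⟩; exact (le_abs_self _).trans (hb0 x i)⟩ i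
  simp only [mem_ofPred_eq]
  linarith

lemma aux_radS_bdd {X : Type*} {n : ℕ} (x : Fin n → X) (H : Set (X → ℝ))
    (hH : ∀ h ∈ H, ∀ x, h x ∈ Icc (0:ℝ) 1) (σ : Fin n → Bool) :
    BddAbove ((fun h => (1 / (n : ℝ)) * ∑ i, (if σ i then (1 : ℝ) else -1) * h (x i)) '' H) :=
  ⟨1, by rintro _ ⟨h, hh, rfl⟩; exact (le_abs_self _).trans (aux_avg _ fun j => aux_sgn _ _ (hH h hh _))⟩

lemma aux_radS_mono {X : Type*} {n : ℕ} (x : Fin n → X) (H K : Set (X → ℝ)) (hHK : H ⊆ K) (hne : H.Nonempty)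
    (hK : ∀ h ∈ K, ∀ x, h x ∈ Icc (0:ℝ) 1) : radS x H ≤ radS x K := by
  unfold radS
  refine div_le_div_of_nonneg_right (Finset.sum_le_sum fun σ _ => ?_) (by positivity)
  exact csSup_le_csSup (aux_radS_bdd x K hK σ) (hne.image _) (image_mono hHK)

lemma aux_sum_zero {X : Type*} {n : ℕ} (x : Fin n → X) (h : X → ℝ) :
    ∑ σ : Fin n → Bool, (1 / (n : ℝ)) * ∑ i, (if σ i then (1 : ℝ) else -1) * h (x i) = 0 := by
  rw [← Finset.mul_sum, Finset.sum_comm]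
  refine mul_eq_zero_of_right _ (Finset.sum_eq_zero fun i _ => ?_)
  rw [← Finset.sum_mul]
  refine mul_eq_zero_of_left ?_ _
  have : ∑ σ : Fin n → Bool, (if σ i then (1 : ℝ) else -1) = ∑ σ : Fin n → Bool, -(if σ i then (1 : ℝ) else -1) := by
    refine Fintype.sum_equiv (Function.Involutive.toPerm (fun (σ : Fin n → Bool) j => !σ j)
      (fun σ => by simp)) _ _ fun σ => ?_
    change _ = -(if (!σ i) = true then (1:ℝ) else -1)
    cases σ i <;> simp
  rw [Finset.sum_neg_distrib] at this
  linarith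

lemma aux_radS_nonneg {X : Type*} {n : ℕ} (x : Fin n → X) (H : Set (X → ℝ)) (hne : H.Nonempty)
    (hH : ∀ h ∈ H, ∀ x, h x ∈ Icc (0:ℝ) 1) : 0 ≤ radS x H := by
  obtain ⟨h, hh⟩ := hne
  unfold radS
  refine div_nonneg ?_ (by positivity)
  rw [← aux_sum_zero x h]
  exact Finset.sum_le_sum fun σ _ => le_csSup (aux_radS_bdd x H hH σ) ⟨h, hh, rfl⟩

lemma aux_radS_unit {X : Type*} {n : ℕ} (x : Fin n → X) (h : X → ℝ) :
    radS x (range fun _ : Unit => h) = 0 := by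
  unfold radS
  rw [range_const]
  simp only [image_singleton, csSup_singleton]
  rw [aux_sum_zero, zero_div]

lemma aux_emp_prob {X : Type*} [MeasurableSpace X] {n : ℕ} (hn : 1 ≤ n) (x : Fin n → X) :
    IsProbabilityMeasure (empD x) := by
  constructor
  unfold empD
  simp only [Measure.smul_apply, Measure.finsetSum_apply, measure_univ, smul_eq_mul, Finset.sum_const,
    Finset.card_univ, Fintype.card_fin, nsmul_eq_mul, mul_one]
  exact ENNReal.inv_mul_cancel (by simp; omega) (by simp)

lemma aux_emp_int {X : Type*} [MeasurableSpace X] {n : ℕ} (x : Fin n → X) (u : X → ℝ)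
    (hu : Measurable u) : ∫ z, u z ∂(empD x) = (1 / (n : ℝ)) * ∑ j, u (x j) := by
  unfold empD
  rw [integral_smul_measure, integral_finsetSum_measure]
  · simp_rw [integral_dirac' _ _ hu.stronglyMeasurable]
    simp
  · intro j _
    exact integrable_dirac' hu.stronglyMeasurable (by simp)

lemma aux_ind {X : Type*} [MeasurableSpace X] (μ : Measure X) (v : X → ℝ)
    (hv : Measurable v) (t : ℝ) : ∫ z, (if t < v z then (1:ℝ) else 0) ∂μ = μ.real {z | t < v z} := by
  have hm : MeasurableSet {z | t < v z} := measurableSet_lt measurable_const hv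
  rw [← integral_indicator_one hm]
  rfl

lemma aux_layer {X : Type*} [MeasurableSpace X] (μ : Measure X) [IsProbabilityMeasure μ] (u : X → ℝ)
    (hu : Measurable u) (hr : ∀ x, u x ∈ Icc (0:ℝ) 1) :
    ∫ z, u z ∂μ = ∫ t in Ioc (0:ℝ) 1, μ.real {z | t < u z} := by
  have hi : Integrable u μ := aux_integrable (B := 1) hu fun x => by
    rw [abs_le]; have := hr x; constructor <;> linarith [this.1, this.2]
  rw [hi.integral_eq_integral_meas_lt (Filter.Eventually.of_forall fun x => (hr x).1)]
  refine setIntegral_eq_of_subset_of_forall_sdiff_eq_zero measurableSet_Ioi Ioc_subset_Ioi_self ?_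
  rintro t ⟨h1, h2⟩
  have h3 : 1 < t := by
    by_contra h
    exact h2 ⟨h1, not_lt.1 h⟩
  have : {z | t < u z} = ∅ := by
    ext z; simp; linarith [(hr z).2]
  simp [this]

lemma aux_layer_le {X : Type*} [MeasurableSpace X] (μ ν : Measure X) [IsProbabilityMeasure μ]
    [IsProbabilityMeasure ν] (u : X → ℝ)
    (hu : Measurable u) (hr : ∀ x, u x ∈ Icc (0:ℝ) 1) (K : ℝ)
    (hK : ∀ t ∈ Icc (0:ℝ) 1, μ.real {z | t < u z} ≤ ν.real {z | t < u z} + K) :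
    ∫ z, u z ∂μ ≤ ∫ z, u z ∂ν + K := by
  rw [aux_layer μ u hu hr, aux_layer ν u hu hr]
  have hint : ∀ (ρ : Measure X) [IsProbabilityMeasure ρ],
      IntegrableOn (fun t => ρ.real {z | t < u z}) (Ioc (0:ℝ) 1) := fun ρ _ => by
    refine aux_integrable (B := 1) (Antitone.measurable fun s t hst => ?_) fun t => ?_
    · exact measureReal_mono fun z (hz : t < u z) => (lt_of_le_of_lt hst hz : s < u z)
    · rw [abs_of_nonneg measureReal_nonneg]; exact measureReal_le_one
  have h1 : ∫ t in Ioc (0:ℝ) 1, (ν.real {z | t < u z} + K) = (∫ t in Ioc (0:ℝ) 1, ν.real {z | t < u z}) + K := by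
    rw [integral_add (hint ν) (integrable_const K)]; simp
  rw [← h1]
  refine setIntegral_mono_on (hint μ) ((hint ν).add (integrable_const K)) measurableSet_Ioc fun t ht => ?_
  exact hK t ⟨ht.1.le, ht.2⟩

lemma aux_rat {X : Type*} [MeasurableSpace X] (μ : Measure X) [IsProbabilityMeasure μ]
    (u : X → ℝ) (hr : ∀ x, u x ∈ Icc (0:ℝ) 1) (t C : ℝ) (ht : t ∈ Icc (0:ℝ) 1) (hC : 0 ≤ C)
    (h : ∀ q : ℚ, t < q → (q:ℝ) ∈ Icc (0:ℝ) 1 → μ.real {z | (q:ℝ) < u z} ≤ C) :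
    μ.real {z | t < u z} ≤ C := by
  have hU : {z | t < u z} = ⋃ q : {q : ℚ // t < q}, {z | (q.1:ℝ) < u z} := by
    ext z
    simp only [mem_iUnion, mem_ofPred_eq]
    constructor
    · intro hz
      obtain ⟨q, h1, h2⟩ := exists_rat_btwn hz
      exact ⟨⟨q, h1⟩, h2⟩
    · rintro ⟨⟨q, h1⟩, h2⟩
      exact h1.trans h2
  have hd : Directed (· ⊆ ·) (fun q : {q : ℚ // t < q} => {z | (q.1:ℝ) < u z}) := by
    rintro ⟨a, ha⟩ ⟨b, hb⟩
    refine ⟨⟨min a b, by push_cast; exact lt_min ha hb⟩, ?_, ?_⟩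
    · intro z (hz : (a:ℝ) < u z)
      change ((min a b : ℚ) : ℝ) < u z
      push_cast; exact lt_of_le_of_lt (min_le_left _ _) hz
    · intro z (hz : (b:ℝ) < u z)
      change ((min a b : ℚ) : ℝ) < u z
      push_cast; exact lt_of_le_of_lt (min_le_right _ _) hz
  refine ENNReal.toReal_le_of_le_ofReal hC ?_
  rw [hU, hd.measure_iUnion]
  refine iSup_le fun q => ?_
  obtain ⟨q, hq⟩ := q
  by_cases h1 : (q:ℝ) ≤ 1
  · rw [← ENNReal.ofReal_toReal (measure_ne_top μ _)]
    exact ENNReal.ofReal_le_ofReal (h q hq ⟨ht.1.trans hq.le, h1⟩)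
  · have : {z | (q:ℝ) < u z} = ∅ := by
      ext z; simp; linarith [(hr z).2]
    simp [this]

theorem stmt_6 {X : Type*} [MeasurableSpace X]
    (DS DT : Measure X) [IsProbabilityMeasure DS] [IsProbabilityMeasure DT]
    (fS fT : X → ℝ) (hfSmeas : Measurable fS) (hfTmeas : Measurable fT)
    (hfSrange : ∀ x, fS x ∈ Icc (0 : ℝ) 1) (hfTrange : ∀ x, fT x ∈ Icc (0 : ℝ) 1)
    (H : Set (X → ℝ)) (hHcount : H.Countable) (hHne : H.Nonempty)
    (hmeas : ∀ h ∈ H, Measurable h)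
    (hrange : ∀ h ∈ H, ∀ x, h x ∈ Icc (0 : ℝ) 1)
    (hfS : fS ∈ H) (hfT : fT ∈ H)
    (n : ℕ) (hn : 1 ≤ n) (δ : ℝ) (hδ : δ ∈ Ioo (0 : ℝ) 1) :
    ENNReal.ofReal (1 - δ) ≤
      ((Measure.pi fun _ : Fin n => DS).prod (Measure.pi fun _ : Fin n => DT))
        {p | ∀ h ∈ H,
          ∫ x, |h x - fT x| ∂DT ≤
            (1 / (n : ℝ)) * ∑ i, |h (p.1 i) - fS (p.1 i)|
              + dH (Htilde H) (empD p.1) (empD p.2)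
              + 2 * radS p.1 H + 2 * radS p.1 (Htilde H) + 2 * radS p.2 (Htilde H)
              + min (∫ x, |fS x - fT x| ∂DS) (∫ x, |fS x - fT x| ∂DT)
              + 3 * Real.sqrt (Real.log (4 / δ) / (2 * n))
              + 6 * Real.sqrt (Real.log (8 / δ) / (2 * n))} := by
  obtain ⟨hδ0, hδ1⟩ := hδ
  have hn' : (0:ℝ) < n := by exact_mod_cast hn
  have hcH : Countable H := hHcount.to_subtype
  have hab : ∀ g ∈ H, ∀ g' ∈ H, ∀ x, |g x - g' x| ∈ Icc (0:ℝ) 1 := fun g hg g' hg' x => by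
    obtain ⟨h1, h2⟩ := hrange g hg x
    obtain ⟨h3, h4⟩ := hrange g' hg' x
    refine ⟨abs_nonneg _, abs_le.2 ⟨by linarith, by linarith⟩⟩
  have habm : ∀ g ∈ H, ∀ g' ∈ H, Measurable fun x => |g x - g' x| := fun g hg g' hg' =>
    _root_.continuous_abs.measurable.comp ((hmeas g hg).sub (hmeas g' hg'))
  let f : H × H × {q : ℚ // (q:ℝ) ∈ Icc (0:ℝ) 1} → X → ℝ := fun i x =>
    if ((i.2.2.1 : ℚ) : ℝ) < |i.1.1 x - i.2.1.1 x| then (1:ℝ) else 0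
  have hneI : Nonempty (H × H × {q : ℚ // (q:ℝ) ∈ Icc (0:ℝ) 1}) :=
    ⟨⟨fS, hfS⟩, ⟨fS, hfS⟩, ⟨0, by simp⟩⟩
  have hfm : ∀ i, Measurable (f i) := fun i =>
    Measurable.ite (measurableSet_lt measurable_const (habm _ i.1.2 _ i.2.1.2)) measurable_const measurable_const
  have hfr : ∀ i x, f i x ∈ Icc (0:ℝ) 1 := fun i x => by
    simp only [f]; split_ifs <;> simp
  have hHtr : ∀ u ∈ Htilde H, ∀ x, u x ∈ Icc (0:ℝ) 1 := by
    rintro u ⟨g, hg, g', hg', t, ht, rfl⟩ x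
    dsimp only; split_ifs <;> simp
  have hsub : range f ⊆ Htilde H := by
    rintro _ ⟨i, rfl⟩
    exact ⟨i.1.1, i.1.2, i.2.1.1, i.2.1.2, _, i.2.2.2, rfl⟩
  have hHtne : (Htilde H).Nonempty := (range_nonempty f).mono hsub
  have bad2 := aux_unif f hfm hfr DT n hn (δ / 2) (by linarith) (by linarith)
  have bad1 := aux_unif (fun (_ : Unit) x => 1 - |fS x - fT x|) (fun _ => (habm fS hfS fT hfT).const_sub 1)
    (fun _ x => by
      obtain ⟨h1, h2⟩ := hab fS hfS fT hfT x
      constructor <;> linarith) DS n hn (δ / 2) (by linarith) (by linarith)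
  set B2 := {x : Fin n → X | ∃ i, (1 / (n : ℝ)) * ∑ j, f i (x j) + 2 * radS x (range f)
        + 3 * Real.sqrt (Real.log (1 / (δ / 2)) / (2 * n)) < ∫ z, f i z ∂DT} with hB2
  set B1 := {x : Fin n → X | ∃ _ : Unit, (1 / (n : ℝ)) * ∑ j, (1 - |fS (x j) - fT (x j)|)
        + 2 * radS x (range (fun (_ : Unit) x => 1 - |fS x - fT x|))
        + 3 * Real.sqrt (Real.log (1 / (δ / 2)) / (2 * n)) < ∫ z, (1 - |fS z - fT z|) ∂DS} with hB1
  set Q := ((Measure.pi fun _ : Fin n => DS).prod (Measure.pi fun _ : Fin n => DT)) with hQ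
  set S := {p : (Fin n → X) × (Fin n → X) | ∀ h ∈ H,
          ∫ x, |h x - fT x| ∂DT ≤
            (1 / (n : ℝ)) * ∑ i, |h (p.1 i) - fS (p.1 i)|
              + dH (Htilde H) (empD p.1) (empD p.2)
              + 2 * radS p.1 H + 2 * radS p.1 (Htilde H) + 2 * radS p.2 (Htilde H)
              + min (∫ x, |fS x - fT x| ∂DS) (∫ x, |fS x - fT x| ∂DT)
              + 3 * Real.sqrt (Real.log (4 / δ) / (2 * n))
              + 6 * Real.sqrt (Real.log (8 / δ) / (2 * n))} with hS
  have hc1 : 3 * Real.sqrt (Real.log (1 / (δ / 2)) / (2 * n)) ≤ 3 * Real.sqrt (Real.log (4 / δ) / (2 * n)) := by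
    gcongr 3 * Real.sqrt (Real.log ?_ / (2 * n))
    rw [one_div_div]; gcongr; norm_num
  have hc2 : 3 * Real.sqrt (Real.log (1 / (δ / 2)) / (2 * n)) ≤ 6 * Real.sqrt (Real.log (8 / δ) / (2 * n)) := by
    have : Real.sqrt (Real.log (1 / (δ / 2)) / (2 * n)) ≤ Real.sqrt (Real.log (8 / δ) / (2 * n)) := by
      gcongr Real.sqrt (Real.log ?_ / (2 * n))
      rw [one_div_div]; gcongr; norm_num
    have h0 := Real.sqrt_nonneg (Real.log (8 / δ) / (2 * n))
    linarith
  set c := 3 * Real.sqrt (Real.log (1 / (δ / 2)) / (2 * n)) with hc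
  have hc0 : 0 ≤ c := by positivity
  have hcover : (univ : Set ((Fin n → X) × (Fin n → X))) ⊆ S ∪ (B1 ×ˢ univ ∪ univ ×ˢ B2) := by
    intro p _
    by_cases hp1 : p.1 ∈ B1
    · exact Or.inr (Or.inl ⟨hp1, mem_univ _⟩)
    by_cases hp2 : p.2 ∈ B2
    · exact Or.inr (Or.inr ⟨mem_univ _, hp2⟩)
    left
    have : IsProbabilityMeasure (empD p.1) := aux_emp_prob hn p.1
    have : IsProbabilityMeasure (empD p.2) := aux_emp_prob hn p.2
    have hA : ∀ i, ∫ z, f i z ∂DT ≤ (1 / (n : ℝ)) * ∑ j, f i (p.2 j) + 2 * radS p.2 (Htilde H) + c := by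
      intro i
      by_contra hcon
      apply hp2
      refine ⟨i, lt_of_le_of_lt ?_ (not_le.1 hcon)⟩
      have := aux_radS_mono p.2 (range f) (Htilde H) hsub (range_nonempty f) hHtr
      linarith
    have hB : (1 / (n : ℝ)) * ∑ j, |fS (p.1 j) - fT (p.1 j)| ≤ ∫ x, |fS x - fT x| ∂DS + c := by
      by_contra hcon
      apply hp1
      refine ⟨(), ?_⟩
      rw [aux_radS_unit, integral_sub (integrable_const _) (aux_integrable (B := 1) (habm fS hfS fT hfT)
        fun x => by rw [abs_abs]; exact (hab fS hfS fT hfT x).2), Finset.sum_sub_distrib, mul_sub]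
      have : (1 / (n:ℝ)) * ∑ j : Fin n, (1:ℝ) = 1 := by simp; field_simp
      rw [this]
      simp only [integral_const, probReal_univ, smul_eq_mul]
      linarith [not_le.1 hcon]
    have hdb : BddAbove ((fun h => |((empD p.1) {x | h x = 1}).toReal - ((empD p.2) {x | h x = 1}).toReal|) '' Htilde H) := by
      refine ⟨1, ?_⟩
      rintro _ ⟨h, _, rfl⟩
      have h1 : ((empD p.1) {x | h x = 1}).toReal ≤ 1 := measureReal_le_one (μ := empD p.1)
      have h2 : ((empD p.2) {x | h x = 1}).toReal ≤ 1 := measureReal_le_one (μ := empD p.2)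
      have h3 : 0 ≤ ((empD p.1) {x | h x = 1}).toReal := ENNReal.toReal_nonneg
      have h4 : 0 ≤ ((empD p.2) {x | h x = 1}).toReal := ENNReal.toReal_nonneg
      exact abs_le.2 ⟨by linarith, by linarith⟩
    have hR1 := aux_radS_nonneg p.1 H hHne hrange
    have hR2 := aux_radS_nonneg p.1 (Htilde H) hHtne hHtr
    have hR3 := aux_radS_nonneg p.2 (Htilde H) hHtne hHtr
    have hC : ∀ g ∈ H, ∀ g' ∈ H, ∫ x, |g x - g' x| ∂DT ≤ (1 / (n : ℝ)) * ∑ j, |g (p.1 j) - g' (p.1 j)|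
        + (dH (Htilde H) (empD p.1) (empD p.2) + 2 * radS p.2 (Htilde H) + c) := by
      intro g hg g' hg'
      rw [← aux_emp_int p.1 (fun x => |g x - g' x|) (habm g hg g' hg')]
      refine aux_layer_le DT (empD p.1) (fun x => |g x - g' x|) (habm g hg g' hg') (hab g hg g' hg') _ ?_
      intro t ht
      have hd : (empD p.2).real {z | t < |g z - g' z|} ≤ (empD p.1).real {z | t < |g z - g' z|}
          + dH (Htilde H) (empD p.1) (empD p.2) := by
        have := le_csSup hdb ⟨_, ⟨g, hg, g', hg', t, ht, rfl⟩, rfl⟩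
        have hset : {x | (if t < |g x - g' x| then (1:ℝ) else 0) = 1} = {z | t < |g z - g' z|} := by
          ext z; simp
        simp only [hset] at this
        have h2 := (abs_le.1 this).1
        change - dH (Htilde H) (empD p.1) (empD p.2) ≤ (empD p.1).real _ - (empD p.2).real _ at h2
        linarith
      have hT : DT.real {z | t < |g z - g' z|} ≤ (empD p.2).real {z | t < |g z - g' z|}
          + 2 * radS p.2 (Htilde H) + c := by
        refine aux_rat DT (fun x => |g x - g' x|) (hab g hg g' hg') t _ ht ?_ ?_
        · have : 0 ≤ (empD p.2).real {z | t < |g z - g' z|} := measureReal_nonneg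
          linarith
        · intro q htq hq
          have h1 := hA (⟨g, hg⟩, ⟨g', hg'⟩, ⟨q, hq⟩)
          rw [← aux_emp_int p.2 _ (hfm _)] at h1
          simp only [f] at h1
          rw [aux_ind DT (fun x => |g x - g' x|) (habm g hg g' hg'),
            aux_ind (empD p.2) (fun x => |g x - g' x|) (habm g hg g' hg')] at h1
          have h2 : (empD p.2).real {z | (q:ℝ) < |g z - g' z|} ≤ (empD p.2).real {z | t < |g z - g' z|} :=
            measureReal_mono fun z (hz : (q:ℝ) < |g z - g' z|) => (htq.trans hz : t < |g z - g' z|)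
          linarith
      linarith
    intro h hh
    have hi : ∀ g ∈ H, ∀ g' ∈ H, Integrable (fun x => |g x - g' x|) DT := fun g hg g' hg' =>
      aux_integrable (B := 1) (habm g hg g' hg') fun x => by rw [abs_abs]; exact (hab g hg g' hg' x).2
    have hm1 : ∫ x, |h x - fT x| ∂DT ≤ (1 / (n : ℝ)) * ∑ i, |h (p.1 i) - fS (p.1 i)|
        + (∫ x, |fS x - fT x| ∂DS + c)
        + (dH (Htilde H) (empD p.1) (empD p.2) + 2 * radS p.2 (Htilde H) + c) := by
      have h1 := hC h hh fT hfT
      have h2 : (1 / (n : ℝ)) * ∑ j, |h (p.1 j) - fT (p.1 j)| ≤ (1 / (n : ℝ)) * ∑ j, |h (p.1 j) - fS (p.1 j)|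
          + (1 / (n : ℝ)) * ∑ j, |fS (p.1 j) - fT (p.1 j)| := by
        rw [← mul_add, ← Finset.sum_add_distrib]
        exact mul_le_mul_of_nonneg_left (Finset.sum_le_sum fun j _ => abs_sub_le _ _ _) (by positivity)
      linarith
    have hm2 : ∫ x, |h x - fT x| ∂DT ≤ (1 / (n : ℝ)) * ∑ i, |h (p.1 i) - fS (p.1 i)|
        + ∫ x, |fS x - fT x| ∂DT
        + (dH (Htilde H) (empD p.1) (empD p.2) + 2 * radS p.2 (Htilde H) + c) := by
      have h1 := hC h hh fS hfS
      have h2 : ∫ x, |h x - fT x| ∂DT ≤ ∫ x, |h x - fS x| ∂DT + ∫ x, |fS x - fT x| ∂DT := by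
        rw [← integral_add (hi h hh fS hfS) (hi fS hfS fT hfT)]
        exact integral_mono (hi h hh fT hfT) ((hi h hh fS hfS).add (hi fS hfS fT hfT)) fun x => abs_sub_le _ _ _
      linarith
    rcases min_choice (∫ x, |fS x - fT x| ∂DS) (∫ x, |fS x - fT x| ∂DT) with hmin | hmin <;>
    · rw [hmin]; linarith
  have hQ1 : 1 ≤ Q S + ENNReal.ofReal δ := by
    calc 1 = Q univ := by simp [hQ]
      _ ≤ Q (S ∪ (B1 ×ˢ univ ∪ univ ×ˢ B2)) := measure_mono hcover
      _ ≤ Q S + (Q (B1 ×ˢ univ) + Q (univ ×ˢ B2)) :=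
        (measure_union_le _ _).trans (add_le_add le_rfl (measure_union_le _ _))
      _ ≤ Q S + (ENNReal.ofReal (δ / 2) + ENNReal.ofReal (δ / 2)) := by
        gcongr
        · rw [hQ, Measure.prod_prod]; simpa using bad1
        · rw [hQ, Measure.prod_prod]; simpa using bad2
      _ = _ := by rw [← ENNReal.ofReal_add (by linarith) (by linarith)]; congr 2; ring
  rw [ENNReal.ofReal_sub _ hδ0.le, ENNReal.ofReal_one]
  exact tsub_le_iff_right.2 hQ1
end

section
/- Let X and Z be measurable spaces, D_S and D_T probability measures on X, f_S, f_T : X → {0,1} measurable labeling functions, g : X → Z measurable, and h : Z → {0,1} measurable. Let D_S^Z := g_*D_S, D_T^Z := g_*D_T, D_S^Y := (f_S)_*D_S, and D_T^Y := (f_T)_*D_T. Then d_JS(D_S^Y, D_T^Y) ≤ d_JS(D_S^Z, D_T^Z) + √(ε_S(h∘g)) + √(ε_T(h∘g)), where ε_S(h∘g) := E_{x∼D_S}[|h(g(x)) − f_S(x)|] and ε_T(h∘g) := E_{x∼D_T}[|h(g(x)) − f_T(x)|]. -/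
open MeasureTheory
open scoped ENNReal

/-- The Kullback–Leibler divergence `KL(μ‖ν) = ∫ log(dμ/dν) dμ` (real-valued;
this is the correct value whenever `μ ≪ ν`, as is the case below where the
second argument is the midpoint measure). -/
noncomputable def klReal {Ω : Type*} [MeasurableSpace Ω] (μ ν : Measure Ω) : ℝ :=
  ∫ x, llr μ ν x ∂μ

/-- The Jensen–Shannon divergence
`D_JS(μ‖ν) := (1/2)·KL(μ‖m) + (1/2)·KL(ν‖m)` with `m := (μ + ν)/2`. -/
noncomputable def jsDiv {Ω : Type*} [MeasurableSpace Ω] (μ ν : Measure Ω) : ℝ :=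
  (1 / 2) * klReal μ ((2 : ℝ≥0∞)⁻¹ • (μ + ν)) + (1 / 2) * klReal ν ((2 : ℝ≥0∞)⁻¹ • (μ + ν))

/-- The Jensen–Shannon distance `d_JS(μ,ν) := √(D_JS(μ‖ν))`. -/
noncomputable def jsDist {Ω : Type*} [MeasurableSpace Ω] (μ ν : Measure Ω) : ℝ :=
  Real.sqrt (jsDiv μ ν)

/-- FTC in lintegral form. -/
lemma ftc_lint {F f : ℝ → ℝ} {a b : ℝ} (hab : a ≤ b)
    (hd : ∀ x ∈ Set.Icc a b, HasDerivAt F (f x) x) (hc : ContinuousOn f (Set.Icc a b))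
    (hn : ∀ x ∈ Set.Icc a b, 0 ≤ f x) :
    (∫⁻ x in Set.Ioc a b, ENNReal.ofReal (f x)) = ENNReal.ofReal (F b - F a) ∧ 0 ≤ F b - F a := by
  have hu : Set.uIcc a b = Set.Icc a b := Set.uIcc_of_le hab
  have hint : IntervalIntegrable f volume a b := by
    apply ContinuousOn.intervalIntegrable; rwa [hu]
  have h1 : ∫ x in a..b, f x = F b - F a :=
    intervalIntegral.integral_eq_sub_of_hasDerivAt (by rwa [hu]) hint
  have h2 : 0 ≤ ∫ x in a..b, f x := intervalIntegral.integral_nonneg hab hn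
  refine ⟨?_, h1 ▸ h2⟩
  rw [← h1, intervalIntegral.integral_of_le hab, ofReal_integral_eq_lintegral_ofReal]
  · exact (intervalIntegrable_iff_integrableOn_Ioc_of_le hab).1 hint
  · filter_upwards [ae_restrict_mem measurableSet_Ioc] with x hx
    exact hn x ⟨hx.1.le, hx.2⟩

lemma exp_lint {s : ℝ} (hs : 0 < s) :
    (∫⁻ t in Set.Ioi (0:ℝ), ENNReal.ofReal (Real.exp (-s * t))) = ENNReal.ofReal (1 / s) := by
  rw [← ofReal_integral_eq_lintegral_ofReal]
  · rw [integral_exp_mul_Ioi (by linarith)]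
    simp
  · exact integrableOn_exp_mul_Ioi (by linarith) 0
  · filter_upwards with x using (Real.exp_pos _).le

/-- `x log x` -/
noncomputable def KK (s : ℝ) : ℝ := s * Real.log s

lemma KK_deriv {s : ℝ} (hs : s ≠ 0) : HasDerivAt KK (Real.log s + 1) s :=
  Real.hasDerivAt_mul_log hs

lemma KK_cont : Continuous KK := Real.continuous_mul_log

/-- second mixed difference -/
noncomputable def EE (a b c d : ℝ) : ℝ := KK (b + d) - KK (b + c) - KK (a + d) + KK (a + c)

lemma inner_lint {x c d : ℝ} (hx : 0 < x) (hc : 0 < c) (hcd : c ≤ d) :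
    (∫⁻ y in Set.Ioc c d, ENNReal.ofReal (1 / (x + y)))
      = ENNReal.ofReal (Real.log (x + d) - Real.log (x + c)) := by
  refine (ftc_lint (F := fun y => Real.log (x + y)) hcd ?_ ?_ ?_).1
  · intro y hy
    have : x + y ≠ 0 := by have := hy.1; linarith
    simpa using ((hasDerivAt_id y).const_add x).log this
  · apply ContinuousOn.div continuousOn_const (by fun_prop)
    intro y hy
    have := hy.1; linarith
  · intro y hy
    have h0 : 0 < y := hc.trans_le hy.1
    positivity

lemma outer_lint {a b c d : ℝ} (ha : 0 < a) (hab : a ≤ b) (hc : 0 < c) (hcd : c ≤ d) :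
    (∫⁻ x in Set.Ioc a b, ∫⁻ y in Set.Ioc c d, ENNReal.ofReal (1 / (x + y)))
      = ENNReal.ofReal (EE a b c d) ∧ 0 ≤ EE a b c d := by
  have h1 : (∫⁻ x in Set.Ioc a b, ∫⁻ y in Set.Ioc c d, ENNReal.ofReal (1 / (x + y))) =
      ∫⁻ x in Set.Ioc a b, ENNReal.ofReal (Real.log (x + d) - Real.log (x + c)) := by
    apply setLIntegral_congr_fun measurableSet_Ioc
    intro x hx
    exact inner_lint (ha.trans hx.1) hc hcd
  have h2 := ftc_lint (F := fun x => KK (x + d) - KK (x + c))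
    (f := fun x => Real.log (x + d) - Real.log (x + c)) hab ?_ ?_ ?_
  · rw [h1, h2.1]
    have : (KK (b + d) - KK (b + c)) - (KK (a + d) - KK (a + c)) = EE a b c d := by
      unfold EE; ring
    exact ⟨by rw [← this], by rw [← this]; exact h2.2⟩
  · intro x hx
    have hx1 := hx.1
    have e1 : x + d ≠ 0 := by linarith
    have e2 : x + c ≠ 0 := by linarith
    have := ((KK_deriv e1).comp_add_const x d).sub ((KK_deriv e2).comp_add_const x c)
    convert! this using 1
    ring
  · apply ContinuousOn.sub
    · apply ContinuousOn.log (by fun_prop)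
      intro x hx; have := hx.1; linarith
    · apply ContinuousOn.log (by fun_prop)
      intro x hx; have := hx.1; linarith
  · intro x hx
    have hx1 := hx.1
    have := Real.log_le_log (show 0 < x + c by linarith) (show x + c ≤ x + d by linarith)
    linarith

/-- Laplace transform of an indicator -/
noncomputable def UU (a b t : ℝ) : ℝ≥0∞ := ∫⁻ x in Set.Ioc a b, ENNReal.ofReal (Real.exp (-x * t))

lemma UU_meas (a b : ℝ) : Measurable (UU a b) := by
  unfold UU
  apply Measurable.lintegral_prod_right' (f := fun p : ℝ × ℝ => ENNReal.ofReal (Real.exp (-p.2 * p.1)))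
  fun_prop

lemma UU_mul {a b c d : ℝ} (ha : 0 < a) (hab : a ≤ b) (hc : 0 < c) (hcd : c ≤ d) :
    (∫⁻ t in Set.Ioi (0:ℝ), UU a b t * UU c d t) = ENNReal.ofReal (EE a b c d) := by
  rw [← (outer_lint ha hab hc hcd).1]
  have h1 : ∀ t, UU a b t * UU c d t = ∫⁻ x in Set.Ioc a b, ∫⁻ y in Set.Ioc c d,
      ENNReal.ofReal (Real.exp (-(x + y) * t)) := by
    intro t
    unfold UU
    rw [← lintegral_mul_const _ (by fun_prop)]
    congr 1; ext x
    rw [← lintegral_const_mul _ (by fun_prop)]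
    congr 1; ext y
    rw [← ENNReal.ofReal_mul (Real.exp_pos _).le, ← Real.exp_add]
    congr 2; ring
  simp_rw [h1]
  rw [lintegral_lintegral_swap]
  · apply setLIntegral_congr_fun measurableSet_Ioc
    intro x hx
    simp only
    rw [lintegral_lintegral_swap]
    · apply setLIntegral_congr_fun measurableSet_Ioc
      intro y hy
      exact exp_lint (by have := hx.1; have := hy.1; linarith)
    · apply Measurable.aemeasurable
      fun_prop
  · apply Measurable.aemeasurable
    apply Measurable.lintegral_prod_right'
      (f := fun p : (ℝ × ℝ) × ℝ => ENNReal.ofReal (Real.exp (-(p.1.2 + p.2) * p.1.1)))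
    fun_prop

lemma EE_cs {p r q : ℝ} (hp : 0 < p) (hpr : p ≤ r) (hrq : r ≤ q) :
    EE p r r q ^ 2 ≤ EE p r p r * EE r q r q := by
  have hr := hp.trans_le hpr
  have h := ENNReal.lintegral_mul_le_Lp_mul_Lq (volume.restrict (Set.Ioi (0:ℝ)))
    Real.HolderConjugate.two_two (UU_meas p r).aemeasurable (UU_meas r q).aemeasurable
  have e1 : ∀ u : ℝ≥0∞, u ^ (2:ℝ) = u * u := by
    intro u; rw [ENNReal.rpow_two, sq]
  simp only [e1, Pi.mul_apply] at h
  rw [UU_mul hp hpr hr hrq, UU_mul hp hpr hp hpr, UU_mul hr hrq hr hrq] at h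
  have nA := (outer_lint hp hpr hp hpr).2
  have nB := (outer_lint hr hrq hr hrq).2
  have nC := (outer_lint hp hpr hr hrq).2
  rw [ENNReal.ofReal_rpow_of_nonneg nA (by norm_num), ENNReal.ofReal_rpow_of_nonneg nB (by norm_num),
    ← ENNReal.ofReal_mul (by positivity), ENNReal.ofReal_le_ofReal_iff (by positivity),
    ← Real.sqrt_eq_rpow, ← Real.sqrt_eq_rpow, ← Real.sqrt_mul nA] at h
  exact (Real.le_sqrt nC (mul_nonneg nA nB)).1 h

lemma EE_cs0 {p r q : ℝ} (hp : 0 ≤ p) (hpr : p ≤ r) (hrq : r ≤ q) :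
    EE p r r q ^ 2 ≤ EE p r p r * EE r q r q := by
  have hk := KK_cont
  have hc1 : Continuous fun e : ℝ => EE (p+e) (r+e) (r+e) (q+e) ^ 2 := by unfold EE; fun_prop
  have hc2 : Continuous fun e : ℝ => EE (p+e) (r+e) (p+e) (r+e) * EE (r+e) (q+e) (r+e) (q+e) := by
    unfold EE; fun_prop
  have t1 := (hc1.tendsto 0).mono_left (nhdsWithin_le_nhds (s := Set.Ioi 0))
  have t2 := (hc2.tendsto 0).mono_left (nhdsWithin_le_nhds (s := Set.Ioi 0))
  simp only [add_zero] at t1 t2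
  refine le_of_tendsto_of_tendsto t1 t2 ?_
  filter_upwards [self_mem_nhdsWithin] with e he
  have he : 0 < e := he
  exact EE_cs (by linarith) (by linarith) (by linarith)

lemma EE_nonneg {a b : ℝ} (ha : 0 ≤ a) (hb : 0 ≤ b) : 0 ≤ EE a b a b := by
  have := Real.convexOn_mul_log.2 (show (2 * a) ∈ Set.Ici (0:ℝ) by simpa using ha)
    (show (2 * b) ∈ Set.Ici (0:ℝ) by simpa using hb) 
    (show (0:ℝ) ≤ 1/2 by norm_num) (show (0:ℝ) ≤ 1/2 by norm_num) (by norm_num)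
  simp only [smul_eq_mul] at this
  have e : 1 / 2 * (2 * a) + 1 / 2 * (2 * b) = a + b := by ring
  rw [e] at this
  unfold EE KK
  rw [← two_mul, ← two_mul, add_comm b a]
  linarith

/-- Cauchy-Schwarz in all orders. -/
lemma EE_cs_all {p r q : ℝ} (hp : 0 ≤ p) (hr : 0 ≤ r) (hq : 0 ≤ q) :
    EE p r r q ^ 2 ≤ EE p r p r * EE r q r q := by
  have key : ∀ x y z : ℝ, 0 ≤ x → x ≤ y → y ≤ z → 
      EE x y y z ^ 2 ≤ EE x y x y * EE y z y z ∧ EE y z z x ^ 2 ≤ EE y z y z * EE z x z x 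
      ∧ EE z x x y ^ 2 ≤ EE z x z x * EE x y x y ∧ EE z y y x ^ 2 ≤ EE z y z y * EE y x y x
      ∧ EE y x x z ^ 2 ≤ EE y x y x * EE x z x z ∧ EE x z z y ^ 2 ≤ EE x z x z * EE z y z y := by
    intro x y z hx hxy hyz
    have h := EE_cs0 hx hxy hyz
    unfold EE at *
    rw [add_comm y x, add_comm z x, add_comm z y] at *
    refine ⟨?_, ?_, ?_, ?_, ?_, ?_⟩ <;> nlinarith [h]
  rcases le_total p r with h1 | h1 <;> rcases le_total r q with h2 | h2 <;>
    rcases le_total p q with h3 | h3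
  · exact (key p r q hp h1 h2).1
  · exact (key p r q hp h1 h2).1
  · exact (key p q r hp h3 h2).2.2.2.2.2
  · exact (key q p r hq h3 h1).2.1
  · exact (key r p q hr h1 h3).2.2.2.2.1
  · exact (key r q p hr h2 h3).2.2.1
  · exact (key q r p hq h2 h1).2.2.2.1
  · exact (key q r p hq h2 h1).2.2.2.1

/-- Binary JS divergence. -/
noncomputable def JB (p q : ℝ) : ℝ := (EE p q p q + EE (1-p) (1-q) (1-p) (1-q)) / 4

lemma JB_symm (p q : ℝ) : JB p q = JB q p := by
  unfold JB EE
  rw [add_comm p q, add_comm (1-p) (1-q)]; ring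

lemma JB_nonneg {p q : ℝ} (hp : p ∈ Set.Icc (0:ℝ) 1) (hq : q ∈ Set.Icc (0:ℝ) 1) : 0 ≤ JB p q := by
  have := EE_nonneg hp.1 hq.1
  have := EE_nonneg (sub_nonneg.2 hp.2) (sub_nonneg.2 hq.2)
  unfold JB; linarith

lemma JB_tri {p r q : ℝ} (hp : p ∈ Set.Icc (0:ℝ) 1) (hr : r ∈ Set.Icc (0:ℝ) 1)
    (hq : q ∈ Set.Icc (0:ℝ) 1) : √(JB p q) ≤ √(JB p r) + √(JB r q) := by
  have nA := JB_nonneg hp hr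
  have nB := JB_nonneg hr hq
  have a1 := EE_nonneg hp.1 hr.1
  have a2 := EE_nonneg (sub_nonneg.2 hp.2) (sub_nonneg.2 hr.2)
  have b1 := EE_nonneg hr.1 hq.1
  have b2 := EE_nonneg (sub_nonneg.2 hr.2) (sub_nonneg.2 hq.2)
  have c1 := EE_cs_all hp.1 hr.1 hq.1
  have c2 := EE_cs_all (sub_nonneg.2 hp.2) (sub_nonneg.2 hr.2) (sub_nonneg.2 hq.2)
  have hsum : JB p q = JB p r + JB r q + 2 * ((EE p r r q + EE (1-p) (1-r) (1-r) (1-q)) / 4) := by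
    unfold JB EE
    rw [add_comm p q, add_comm p r, add_comm r q, add_comm (1-p) (1-q), add_comm (1-p) (1-r),
      add_comm (1-r) (1-q)]
    ring
  have hAB : (EE p r r q + EE (1-p) (1-r) (1-r) (1-q)) / 4 ≤ √(JB p r) * √(JB r q) := by
    rw [← Real.sqrt_mul nA]
    apply Real.le_sqrt_of_sq_le
    have gen : ∀ A A' B B' C C' : ℝ, 0 ≤ A → 0 ≤ A' → 0 ≤ B → 0 ≤ B' → C^2 ≤ A * B →
        C'^2 ≤ A' * B' → ((C + C')/4)^2 ≤ (A + A')/4 * ((B + B')/4) := by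
      intro A A' B B' C C' hA hA' hB hB' h h'
      have h3 : (C * C')^2 ≤ ((A * B' + A' * B)/2)^2 := by
        calc (C * C')^2 = C^2 * C'^2 := by ring
          _ ≤ (A * B) * (A' * B') := by gcongr
          _ ≤ _ := by nlinarith [sq_nonneg (A * B' - A' * B)]
      have h4 := abs_le_of_sq_le_sq h3 (by positivity)
      nlinarith [le_abs_self (C * C'), h4]
    exact gen _ _ _ _ _ _ a1 a2 b1 b2 c1 c2
  apply Real.sqrt_le_iff.2 ⟨by positivity, ?_⟩
  nlinarith [Real.sq_sqrt nA, Real.sq_sqrt nB]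

lemma EE_le {p q : ℝ} (hp : 0 ≤ p) (hpq : p ≤ q) : EE p q p q ≤ 2 * (q - p) := by
  rcases eq_or_lt_of_le hp with rfl | hp
  · rcases eq_or_lt_of_le hpq with rfl | hq
    · simp [EE, KK]
    · unfold EE KK
      simp only [zero_add, add_zero, Real.log_zero]
      rw [← two_mul, Real.log_mul (by norm_num) hq.ne']
      nlinarith [Real.log_two_lt_d9]
  · have hq := hp.trans_le hpq
    have h1 := Real.log_le_sub_one_of_pos (show 0 < (q+q)/(q+p) by positivity)
    have h2 : Real.log (p+p) ≤ Real.log (p+q) := Real.log_le_log (by positivity) (by linarith)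
    rw [Real.log_div (by positivity) (by positivity)] at h1
    have h3 : q * ((q+q)/(q+p) - 1) ≤ q - p := by
      have : (q+q)/(q+p) - 1 = (q-p)/(q+p) := by field_simp; ring
      rw [this, ← mul_div_assoc, div_le_iff₀ (by positivity)]
      nlinarith
    unfold EE KK
    rw [add_comm q p] at *
    nlinarith [mul_le_mul_of_nonneg_left h1 hq.le, mul_le_mul_of_nonneg_left h2 hp.le]

lemma JB_le {p q : ℝ} (hp : p ∈ Set.Icc (0:ℝ) 1) (hq : q ∈ Set.Icc (0:ℝ) 1) :
    JB p q ≤ |p - q| := by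
  wlog h : p ≤ q generalizing p q
  · rw [JB_symm, abs_sub_comm]
    exact this hq hp (le_of_not_ge h)
  have h1 := EE_le hp.1 h
  have h2 := EE_le (sub_nonneg.2 hq.2) (show 1 - q ≤ 1 - p by linarith)
  rw [abs_sub_comm, abs_of_nonneg (by linarith)]
  have : EE (1-p) (1-q) (1-p) (1-q) = EE (1-q) (1-p) (1-q) (1-p) := by
    unfold EE; rw [add_comm (1-p) (1-q)]; ring
  unfold JB
  rw [this]
  linarith

open InformationTheory in
lemma kl_fin {Ω : Type*} [MeasurableSpace Ω] {μ m : Measure Ω} [IsProbabilityMeasure μ]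
    [IsProbabilityMeasure m] (h : ∀ s, μ s ≤ 2 * m s) : μ ≪ m ∧ klDiv μ m ≠ ⊤ := by
  have hac : μ ≪ m := by
    intro s hs
    have := h s
    simpa [hs] using this
  refine ⟨hac, klDiv_ne_top hac ?_⟩
  rw [← integrable_klFun_rnDeriv_iff hac]
  have hle : μ.rnDeriv m ≤ᵐ[m] fun _ => 2 := by
    refine ae_le_of_forall_setLIntegral_le_of_sigmaFinite (μ.measurable_rnDeriv m) fun s _ _ ↦ ?_
    rw [setLIntegral_const]
    exact (Measure.setLIntegral_rnDeriv_le s).trans (h s)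
  obtain ⟨C, hC⟩ := (isCompact_Icc (a := (0:ℝ)) (b := 2)).exists_bound_of_continuousOn
    continuous_klFun.continuousOn
  refine Integrable.of_bound (C := C) ?_ ?_
  · apply Measurable.aestronglyMeasurable
    fun_prop
  · filter_upwards [hle] with x hx
    apply hC
    refine ⟨ENNReal.toReal_nonneg, ?_⟩
    simpa using ENNReal.toReal_mono (by simp) hx

open InformationTheory in
lemma kl_eq {Ω : Type*} [MeasurableSpace Ω] {μ m : Measure Ω} [IsProbabilityMeasure μ]
    [IsProbabilityMeasure m] (h : ∀ s, μ s ≤ 2 * m s) : klReal μ m = (klDiv μ m).toReal := by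
  rw [toReal_klDiv_of_measure_eq (kl_fin h).1 (by simp)]
  rfl

open InformationTheory in
lemma kl_map {Ω Ω' : Type*} [MeasurableSpace Ω] [MeasurableSpace Ω'] {μ m : Measure Ω}
    [IsProbabilityMeasure μ] [IsProbabilityMeasure m] (h : ∀ s, μ s ≤ 2 * m s)
    {g : Ω → Ω'} (hg : Measurable g) :
    klReal (μ.map g) (m.map g) ≤ klReal μ m := by
  have := Measure.isProbabilityMeasure_map (μ := μ) hg.aemeasurable
  have := Measure.isProbabilityMeasure_map (μ := m) hg.aemeasurable
  have h' : ∀ s, μ.map g s ≤ 2 * m.map g s := by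
    have h0 : μ ≤ (2:ℝ≥0∞) • m := fun s => by simpa using h s
    have := Measure.map_mono h0 hg
    intro s
    simpa using this s
  rw [kl_eq h, kl_eq h']
  exact ENNReal.toReal_mono (kl_fin h).2 (klDiv_map_le _ _ hg)

lemma mid_prob {Ω : Type*} [MeasurableSpace Ω] (μ ν : Measure Ω) [IsProbabilityMeasure μ]
    [IsProbabilityMeasure ν] : IsProbabilityMeasure ((2 : ℝ≥0∞)⁻¹ • (μ + ν)) := by
  constructor
  simp only [Measure.smul_apply, Measure.add_apply, measure_univ, smul_eq_mul]
  rw [one_add_one_eq_two]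
  exact ENNReal.inv_mul_cancel (by simp) (by simp)

lemma mid_le {Ω : Type*} [MeasurableSpace Ω] (μ ν : Measure Ω) (s : Set Ω) :
    2 * ((2 : ℝ≥0∞)⁻¹ • (μ + ν)) s = μ s + ν s := by
  simp only [Measure.smul_apply, Measure.add_apply, smul_eq_mul]
  rw [← mul_assoc, ENNReal.mul_inv_cancel (by simp) (by simp), one_mul]

lemma jsDiv_map {Ω Ω' : Type*} [MeasurableSpace Ω] [MeasurableSpace Ω'] (μ ν : Measure Ω)
    [IsProbabilityMeasure μ] [IsProbabilityMeasure ν] {g : Ω → Ω'} (hg : Measurable g) :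
    jsDiv (μ.map g) (ν.map g) ≤ jsDiv μ ν := by
  have := mid_prob μ ν
  unfold jsDiv
  rw [← Measure.map_add _ _ hg, ← Measure.map_smul]
  have h1 := kl_map (μ := μ) (m := (2 : ℝ≥0∞)⁻¹ • (μ + ν))
    (fun s => by rw [mid_le]; exact le_self_add) hg
  have h2 := kl_map (μ := ν) (m := (2 : ℝ≥0∞)⁻¹ • (μ + ν))
    (fun s => by rw [mid_le]; exact le_add_self) hg
  linarith

lemma kl_bin {μ m : Measure ℝ} [IsProbabilityMeasure μ] [IsProbabilityMeasure m]
    (h : ∀ s, μ s ≤ 2 * m s) (h01 : ∀ᵐ x ∂μ, x = 0 ∨ x = 1) :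
    klReal μ m = μ.real {0} * Real.log (μ.real {0} / m.real {0})
      + μ.real {1} * Real.log (μ.real {1} / m.real {1}) := by
  have hac := (kl_fin h).1
  have term : ∀ x : ℝ, μ.real {x} * llr μ m x = μ.real {x} * Real.log (μ.real {x} / m.real {x}) := by
    intro x
    by_cases hx : m {x} = 0
    · have : μ.real {x} = 0 := by simp [measureReal_def, hac hx]
      simp [this]
    · have h1 := Measure.setLIntegral_rnDeriv hac {x}
      rw [lintegral_singleton] at h1
      have h2 : (μ.rnDeriv m x).toReal * m.real {x} = μ.real {x} := by
        rw [measureReal_def, measureReal_def, ← h1, ENNReal.toReal_mul]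
      have h3 : m.real {x} ≠ 0 := by
        rw [measureReal_def]; exact ENNReal.toReal_ne_zero.2 ⟨hx, measure_ne_top _ _⟩
      rw [llr, ← h2, mul_div_cancel_right₀ _ h3]
  unfold klReal
  have hr : μ.restrict (({0, 1} : Finset ℝ) : Set ℝ) = μ := by
    apply Measure.restrict_eq_self_of_ae_mem
    simpa using h01
  rw [← term, ← term]
  have hi := setIntegral_finset (μ := μ) (f := llr μ m) ({0, 1} : Finset ℝ) IntegrableOn.finset
  rw [hr] at hi
  rw [hi]
  simp

lemma js_pt {a b : ℝ} (ha : 0 ≤ a) (hb : 0 ≤ b) :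
    a * Real.log (a / ((a + b) / 2)) + b * Real.log (b / ((a + b) / 2)) = EE a b a b / 2 := by
  have gen : ∀ a b : ℝ, 0 ≤ a → 0 ≤ b → a * Real.log (a / ((a + b) / 2)) =
      a * Real.log (a + a) - a * Real.log (a + b) := by
    intro a b ha hb
    rcases eq_or_lt_of_le ha with rfl | ha
    · simp
    · have : a / ((a + b) / 2) = (a + a) / (a + b) := by field_simp; ring
      rw [this, Real.log_div (by positivity) (by positivity)]; ring
  rw [gen a b ha hb, add_comm a b, gen b a hb ha]
  unfold EE KK
  rw [add_comm a b]
  ring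

lemma jsDiv_bin {μ ν : Measure ℝ} [IsProbabilityMeasure μ] [IsProbabilityMeasure ν]
    (hμ : ∀ᵐ x ∂μ, x = 0 ∨ x = 1) (hν : ∀ᵐ x ∂ν, x = 0 ∨ x = 1)
    (eμ : μ.real {0} = 1 - μ.real {1}) (eν : ν.real {0} = 1 - ν.real {1}) :
    jsDiv μ ν = JB (μ.real {1}) (ν.real {1}) := by
  have := mid_prob μ ν
  unfold jsDiv
  rw [kl_bin (μ := μ) (fun s => by rw [mid_le]; exact le_self_add) hμ,
    kl_bin (μ := ν) (fun s => by rw [mid_le]; exact le_add_self) hν]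
  have hm : ∀ x : ℝ, ((2 : ℝ≥0∞)⁻¹ • (μ + ν)).real {x} = (μ.real {x} + ν.real {x}) / 2 := by
    intro x
    have := congrArg ENNReal.toReal (mid_le μ ν {x})
    rw [ENNReal.toReal_mul, ENNReal.toReal_add (measure_ne_top _ _) (measure_ne_top _ _)] at this
    simp only [measureReal_def]
    simp only [ENNReal.toReal_ofNat] at this
    linarith
  rw [hm, hm]
  have h0 := js_pt (a := μ.real {0}) (b := ν.real {0}) measureReal_nonneg measureReal_nonneg
  have h1 := js_pt (a := μ.real {1}) (b := ν.real {1}) measureReal_nonneg measureReal_nonneg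
  unfold JB
  rw [← eμ, ← eν]
  linarith

lemma map_bin {X : Type*} [MeasurableSpace X] (D : Measure X) [IsProbabilityMeasure D] {f : X → ℝ}
    (hf : Measurable f) (hr : ∀ x, f x = 0 ∨ f x = 1) :
    (∀ᵐ x ∂(D.map f), x = 0 ∨ x = 1) ∧ (D.map f).real {1} = ∫ x, f x ∂D ∧
    (D.map f).real {0} = 1 - (D.map f).real {1} ∧ Integrable f D ∧
    (∫ x, f x ∂D) ∈ Set.Icc (0:ℝ) 1 := by
  have hm := Measure.isProbabilityMeasure_map (μ := D) hf.aemeasurable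
  have h1 : (D.map f).real {1} = ∫ x, f x ∂D := by
    rw [map_measureReal_apply hf (measurableSet_singleton 1),
      ← integral_indicator_one (hf (measurableSet_singleton 1))]
    congr 1; ext x
    rcases hr x with h | h <;> simp [Set.indicator, h]
  refine ⟨?_, h1, ?_, ?_, ?_⟩
  · rw [ae_map_iff hf.aemeasurable]
    · exact Filter.Eventually.of_forall hr
    · exact (measurableSet_singleton (0:ℝ)).union (measurableSet_singleton 1)
  · rw [map_measureReal_apply hf (measurableSet_singleton 1),
      map_measureReal_apply hf (measurableSet_singleton 0),
      ← probReal_compl_eq_one_sub (hf (measurableSet_singleton 1))]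
    congr 1; ext x
    rcases hr x with h | h <;> simp [h]
  · refine Integrable.of_bound (C := 1) hf.aestronglyMeasurable (Filter.Eventually.of_forall ?_)
    intro x
    rcases hr x with h | h <;> simp [h]
  · rw [← h1]
    exact ⟨measureReal_nonneg, measureReal_le_one⟩

lemma err_le {X : Type*} [MeasurableSpace X] (D : Measure X) {f k : X → ℝ}
    (hf : Integrable f D) (hk : Integrable k D) :
    |(∫ x, f x ∂D) - ∫ x, k x ∂D| ≤ ∫ x, |f x - k x| ∂D := by
  rw [← integral_sub hf hk]
  exact abs_integral_le_integral_abs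

theorem stmt_9 {X Z : Type*} [MeasurableSpace X] [MeasurableSpace Z]
    (DS DT : Measure X) [IsProbabilityMeasure DS] [IsProbabilityMeasure DT]
    (fS fT : X → ℝ) (hfS : Measurable fS) (hfT : Measurable fT)
    (hfSr : ∀ x, fS x = 0 ∨ fS x = 1) (hfTr : ∀ x, fT x = 0 ∨ fT x = 1)
    (g : X → Z) (hg : Measurable g)
    (h : Z → ℝ) (hh : Measurable h) (hhr : ∀ z, h z = 0 ∨ h z = 1) :
    jsDist (Measure.map fS DS) (Measure.map fT DT) ≤
      jsDist (Measure.map g DS) (Measure.map g DT) +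
        Real.sqrt (∫ x, |h (g x) - fS x| ∂DS) +
        Real.sqrt (∫ x, |h (g x) - fT x| ∂DT) := by
  have hhg : Measurable fun x => h (g x) := hh.comp hg
  have i1 := Measure.isProbabilityMeasure_map (μ := DS) hfS.aemeasurable
  have i2 := Measure.isProbabilityMeasure_map (μ := DT) hfT.aemeasurable
  have i3 := Measure.isProbabilityMeasure_map (μ := DS) hg.aemeasurable
  have i4 := Measure.isProbabilityMeasure_map (μ := DT) hg.aemeasurable
  have i5 := Measure.isProbabilityMeasure_map (μ := DS) hhg.aemeasurable
  have i6 := Measure.isProbabilityMeasure_map (μ := DT) hhg.aemeasurable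
  obtain ⟨aS, bS, cS, dS, eS⟩ := map_bin DS hfS hfSr
  obtain ⟨aT, bT, cT, dT, eT⟩ := map_bin DT hfT hfTr
  obtain ⟨aS', bS', cS', dS', eS'⟩ := map_bin DS hhg (fun x => hhr (g x))
  obtain ⟨aT', bT', cT', dT', eT'⟩ := map_bin DT hhg (fun x => hhr (g x))
  have hdp := jsDiv_map (DS.map g) (DT.map g) hh
  rw [Measure.map_map hh hg, Measure.map_map hh hg] at hdp
  change jsDiv (DS.map fun x => h (g x)) (DT.map fun x => h (g x)) ≤ _ at hdp
  rw [jsDiv_bin aS' aT' cS' cT', bS', bT'] at hdp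
  unfold jsDist
  rw [jsDiv_bin aS aT cS cT, bS, bT]
  have t1 := JB_tri eS eS' eT
  have t2 := JB_tri eS' eT' eT
  have l1 := Real.sqrt_le_sqrt ((JB_le eS' eS).trans (err_le DS dS' dS))
  have l2 := Real.sqrt_le_sqrt ((JB_le eT' eT).trans (err_le DT dT' dT))
  rw [JB_symm] at l1
  have l3 := Real.sqrt_le_sqrt hdp
  linarith
end

section
/- Let X and Z be measurable spaces, D_S and D_T probability measures on X, f_S, f_T : X → {0,1} measurable labeling functions, g : X → Z measurable, and h : Z → {0,1} measurable. Let D_S^Z := g_*D_S, D_T^Z := g_*D_T, D_S^Y := (f_S)_*D_S, and D_T^Y := (f_T)_*D_T. If d_JS(D_S^Y, D_T^Y) ≥ d_JS(D_S^Z, D_T^Z), then ε_S(h∘g) + ε_T(h∘g) ≥ (1/2)·( d_JS(D_S^Y, D_T^Y) − d_JS(D_S^Z, D_T^Z) )², where ε_S(h∘g) := E_{x∼D_S}[|h(g(x)) − f_S(x)|] and ε_T(h∘g) := E_{x∼D_T}[|h(g(x)) − f_T(x)|]. -/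
open MeasureTheory
open scoped ENNReal

noncomputable def ll (x y : ℝ) : ℝ :=
  x * Real.log x + y * Real.log y - 2 * ((x + y) / 2 * Real.log ((x + y) / 2))

lemma ll_comm (x y : ℝ) : ll x y = ll y x := by
  unfold ll; rw [add_comm y x]; ring

noncomputable def phiA (x y t : ℝ) : ℝ≥0∞ :=
  ∫⁻ s in Set.uIoc x y, ENNReal.ofReal (Real.exp (-(t * s)))

lemma measurable_phiA (x y : ℝ) : Measurable (phiA x y) := by
  unfold phiA
  apply Measurable.lintegral_prod_right'
    (f := fun p : ℝ × ℝ => ENNReal.ofReal (Real.exp (-(p.1 * p.2))))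
  fun_prop

lemma phiA_add (u v w t : ℝ) : phiA u w t ≤ phiA u v t + phiA v w t := by
  unfold phiA
  refine le_trans (lintegral_mono_set (t := Set.uIoc u v ∪ Set.uIoc v w) ?_) ?_
  · intro s hs
    simp only [Set.mem_union, Set.mem_uIoc] at hs ⊢
    grind
  exact lintegral_union_le _ _ _

lemma lint_exp {c : ℝ} (hc : 0 < c) :
    ∫⁻ t in Set.Ioi (0:ℝ), ENNReal.ofReal (Real.exp (-(t * c))) = ENNReal.ofReal (1 / c) := by
  have e : ∀ t : ℝ, -(t * c) = (-c) * t := fun t => by ring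
  simp_rw [e]
  rw [← ofReal_integral_eq_lintegral_ofReal]
  · rw [integral_exp_mul_Ioi (by linarith)]
    simp
  · exact integrableOn_exp_mul_Ioi (by linarith) 0
  · exact Filter.Eventually.of_forall fun t => (Real.exp_pos _).le

lemma inner_int {x y s : ℝ} (hx : 0 < x) (hxy : x ≤ y) (hs : 0 < s) :
    ∫⁻ r in Set.Ioc x y, ENNReal.ofReal (1 / (s + r)) =
      ENNReal.ofReal (Real.log (s + y) - Real.log (s + x)) := by
  have hc : ContinuousOn (fun r : ℝ => 1 / (s + r)) (Set.uIcc x y) := by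
    rw [Set.uIcc_of_le hxy]
    apply ContinuousOn.div (by fun_prop) (by fun_prop)
    intro r hr; have := hr.1; linarith
  rw [← ofReal_integral_eq_lintegral_ofReal]
  · rw [← intervalIntegral.integral_of_le hxy]
    congr 1
    rw [intervalIntegral.integral_eq_sub_of_hasDerivAt (f := fun r => Real.log (s + r))]
    · intro r hr
      rw [Set.uIcc_of_le hxy] at hr
      have := hr.1
      exact ((hasDerivAt_id r).const_add s).log (by simp; linarith)
    · exact hc.intervalIntegrable
  · exact (intervalIntegrable_iff_integrableOn_Ioc_of_le hxy).1 hc.intervalIntegrable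
  · filter_upwards [ae_restrict_mem measurableSet_Ioc] with r hr
    have := hr.1
    have : 0 < s + r := by linarith
    simp; positivity

lemma outer_int {x y : ℝ} (hx : 0 < x) (hxy : x ≤ y) :
    ∫⁻ s in Set.Ioc x y, ENNReal.ofReal (Real.log (s + y) - Real.log (s + x)) =
      ENNReal.ofReal (2 * ll x y) := by
  have hc : ContinuousOn (fun s : ℝ => Real.log (s + y) - Real.log (s + x)) (Set.uIcc x y) := by
    rw [Set.uIcc_of_le hxy]
    apply ContinuousOn.sub
    · apply ContinuousOn.log (by fun_prop)
      intro r hr; have := hr.1; linarith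
    · apply ContinuousOn.log (by fun_prop)
      intro r hr; have := hr.1; linarith
  rw [← ofReal_integral_eq_lintegral_ofReal]
  · rw [← intervalIntegral.integral_of_le hxy]
    congr 1
    rw [intervalIntegral.integral_eq_sub_of_hasDerivAt
      (f := fun s => (s + y) * Real.log (s + y) - (s + x) * Real.log (s + x))]
    · have hy : 0 < y := by linarith
      have e1 : Real.log (y + y) = Real.log 2 + Real.log y := by
        rw [← two_mul, Real.log_mul (by norm_num) hy.ne']
      have e2 : Real.log (x + x) = Real.log 2 + Real.log x := by
        rw [← two_mul, Real.log_mul (by norm_num) hx.ne']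
      have e3 : Real.log ((x + y) / 2) = Real.log (x + y) - Real.log 2 := by
        rw [Real.log_div (by linarith) (by norm_num)]
      unfold ll
      rw [add_comm y x, e1, e2, e3]; ring
    · intro r hr
      rw [Set.uIcc_of_le hxy] at hr
      have := hr.1
      have h1 := (Real.hasDerivAt_mul_log (x := r + y) (by linarith)).comp r
        ((hasDerivAt_id r).add_const y)
      have h2 := (Real.hasDerivAt_mul_log (x := r + x) (by linarith)).comp r
        ((hasDerivAt_id r).add_const x)
      have h3 := h1.sub h2
      refine h3.congr_deriv ?_
      ring
    · exact hc.intervalIntegrable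
  · exact (intervalIntegrable_iff_integrableOn_Ioc_of_le hxy).1 hc.intervalIntegrable
  · filter_upwards [ae_restrict_mem measurableSet_Ioc] with r hr
    have := hr.1
    simp only [Pi.zero_apply, sub_nonneg]
    exact Real.log_le_log (by linarith) (by linarith)

lemma lint_phiA_of_le {x y : ℝ} (hx : 0 < x) (hxy : x ≤ y) :
    ∫⁻ t in Set.Ioi (0:ℝ), (phiA x y t) ^ 2 = ENNReal.ofReal (2 * ll x y) := by
  have h1 : ∀ t : ℝ, phiA x y t ^ 2 = ∫⁻ s in Set.Ioc x y, ∫⁻ r in Set.Ioc x y,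
      ENNReal.ofReal (Real.exp (-(t * (s + r)))) := by
    intro t
    unfold phiA
    rw [Set.uIoc_of_le hxy, sq, ← lintegral_mul_const _ (by fun_prop)]
    congr 1 with s
    rw [← lintegral_const_mul _ (by fun_prop)]
    congr 1 with r
    rw [← ENNReal.ofReal_mul (Real.exp_pos _).le, ← Real.exp_add]
    congr 2; ring
  simp_rw [h1]
  rw [lintegral_lintegral_swap]
  · have h2 : ∀ s ∈ Set.Ioc x y, (∫⁻ t in Set.Ioi (0:ℝ), ∫⁻ r in Set.Ioc x y,
      ENNReal.ofReal (Real.exp (-(t * (s + r))))) =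
        ENNReal.ofReal (Real.log (s + y) - Real.log (s + x)) := by
      intro s hs
      have hs0 : 0 < s := hx.trans hs.1
      rw [lintegral_lintegral_swap (by fun_prop), ← inner_int hx hxy hs0]
      refine setLIntegral_congr_fun measurableSet_Ioc fun r hr => ?_
      exact lint_exp (by have := hr.1; linarith)
    rw [setLIntegral_congr_fun measurableSet_Ioc h2, outer_int hx hxy]
  · apply Measurable.aemeasurable
    apply Measurable.lintegral_prod_right'
      (f := fun p : (ℝ × ℝ) × ℝ => ENNReal.ofReal (Real.exp (-(p.1.1 * (p.1.2 + p.2)))))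
    fun_prop

lemma lint_phiA {x y : ℝ} (hx : 0 < x) (hy : 0 < y) :
    ∫⁻ t in Set.Ioi (0:ℝ), (phiA x y t) ^ 2 = ENNReal.ofReal (2 * ll x y) := by
  rcases le_total x y with h | h
  · exact lint_phiA_of_le hx h
  · rw [ll_comm, ← lint_phiA_of_le hy h]
    unfold phiA
    rw [Set.uIoc_comm]

lemma ll_triangle_pos {u v w : ℝ} (hu : 0 < u) (hv : 0 < v) (hw : 0 < w) :
    √(ll u w) ≤ √(ll u v) + √(ll v w) := by
  have h := ENNReal.lintegral_Lp_add_le (μ := volume.restrict (Set.Ioi (0:ℝ)))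
    (p := 2) (measurable_phiA u v).aemeasurable (measurable_phiA v w).aemeasurable (by norm_num)
  have h0 : (∫⁻ t in Set.Ioi (0:ℝ), (phiA u w t) ^ (2:ℝ)) ^ (1 / 2 : ℝ) ≤
      (∫⁻ t in Set.Ioi (0:ℝ), ((phiA u v + phiA v w) t) ^ (2:ℝ)) ^ (1 / 2 : ℝ) := by
    gcongr with t
    exact phiA_add u v w t
  have h := h0.trans h
  simp only [ENNReal.rpow_two] at h
  rw [lint_phiA hu hw, lint_phiA hu hv, lint_phiA hv hw] at h
  have key : ∀ a : ℝ, (ENNReal.ofReal a) ^ (1 / 2 : ℝ) = ENNReal.ofReal (√a) := by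
    intro a
    rcases le_total 0 a with ha | ha
    · rw [ENNReal.ofReal_rpow_of_nonneg ha (by norm_num), Real.sqrt_eq_rpow]
    · rw [ENNReal.ofReal_of_nonpos ha, Real.sqrt_eq_zero_of_nonpos ha]; simp
  rw [key, key, key, ← ENNReal.ofReal_add (by positivity) (by positivity),
    ENNReal.ofReal_le_ofReal_iff (by positivity)] at h
  simp only [Real.sqrt_mul (show (0:ℝ) ≤ 2 by norm_num)] at h
  have : 0 < √(2:ℝ) := by positivity
  rw [← mul_add] at h
  exact le_of_mul_le_mul_left h this

lemma continuous_ll : Continuous (fun p : ℝ × ℝ => ll p.1 p.2) := by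
  unfold ll
  have := Real.continuous_mul_log
  have h1 : Continuous (fun p : ℝ × ℝ => p.1 * Real.log p.1) := this.comp continuous_fst
  have h2 : Continuous (fun p : ℝ × ℝ => p.2 * Real.log p.2) := this.comp continuous_snd
  have h3 : Continuous (fun p : ℝ × ℝ => (p.1 + p.2) / 2 * Real.log ((p.1 + p.2) / 2)) :=
    this.comp (g := fun z : ℝ => z * Real.log z)
      (f := fun p : ℝ × ℝ => (p.1 + p.2) / 2) (by fun_prop)
  exact (h1.add h2).sub (continuous_const.mul h3)

lemma ll_triangle {u v w : ℝ} (hu : 0 ≤ u) (hv : 0 ≤ v) (hw : 0 ≤ w) :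
    √(ll u w) ≤ √(ll u v) + √(ll v w) := by
  have hc : ∀ a b : ℝ, Filter.Tendsto (fun e : ℝ => √(ll (a + e) (b + e))) (nhdsWithin 0 (Set.Ioi 0))
      (nhds (√(ll a b))) := by
    intro a b
    have : Continuous (fun e : ℝ => √(ll (a + e) (b + e))) :=
      (continuous_ll.comp (f := fun e : ℝ => (a + e, b + e)) (by fun_prop)).sqrt
    have h := this.tendsto 0
    simp only [add_zero] at h
    exact h.mono_left nhdsWithin_le_nhds
  refine le_of_tendsto_of_tendsto (hc u w) ((hc u v).add (hc v w)) ?_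
  filter_upwards [self_mem_nhdsWithin] with e he
  have he : 0 < e := he
  exact ll_triangle_pos (by linarith) (by linarith) (by linarith)

lemma ll_nonneg {x y : ℝ} (hx : 0 ≤ x) (hy : 0 ≤ y) : 0 ≤ ll x y := by
  have := Real.convexOn_mul_log.2 (Set.mem_Ici.2 hx) (Set.mem_Ici.2 hy)
    (show (0:ℝ) ≤ 1/2 by norm_num) (show (0:ℝ) ≤ 1/2 by norm_num) (by norm_num)
  simp only [smul_eq_mul] at this
  have e : (1/2 : ℝ) * x + 1/2 * y = (x + y)/2 := by ring
  rw [e] at this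
  unfold ll
  linarith

lemma ll_le_of_le {x y : ℝ} (hx : 0 ≤ x) (hxy : x ≤ y) : ll x y ≤ y - x := by
  rcases (hx.trans hxy).eq_or_lt with h | hy
  · have : x = 0 := by linarith
    subst this; subst h; simp [ll]
  have hm : 0 < (x + y) / 2 := by linarith
  have h1 : x * Real.log x ≤ x * Real.log ((x + y) / 2) := by
    rcases hx.eq_or_lt with h | h
    · simp [← h]
    · exact mul_le_mul_of_nonneg_left (Real.log_le_log h (by linarith)) hx
  have h2 : Real.log y - Real.log ((x + y) / 2) ≤ y / ((x + y) / 2) - 1 := by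
    rw [← Real.log_div hy.ne' hm.ne']
    exact Real.log_le_sub_one_of_pos (by positivity)
  have h3 := mul_le_mul_of_nonneg_left h2 hy.le
  have h4 : y * (y / ((x + y) / 2) - 1) ≤ y - x := by
    have : y * (y / ((x + y) / 2) - 1) = (y - x) * (y / (x + y)) := by
      field_simp; ring
    rw [this]
    have : y / (x + y) ≤ 1 := by rw [div_le_one (by linarith)]; linarith
    nlinarith
  unfold ll
  nlinarith

lemma ll_le {x y : ℝ} (hx : 0 ≤ x) (hy : 0 ≤ y) : ll x y ≤ |x - y| := by
  rcases le_total x y with h | h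
  · rw [abs_sub_comm, abs_of_nonneg (by linarith)]; exact ll_le_of_le hx h
  · rw [ll_comm, abs_of_nonneg (by linarith)]; exact ll_le_of_le hy h

/-- binary JS divergence -/
noncomputable def jb (a b : ℝ) : ℝ := (1/2) * (ll a b + ll (1 - a) (1 - b))

lemma sqrt_add_triangle {a b c d e f : ℝ} (ha : 0 ≤ a) (hb : 0 ≤ b) (hc : 0 ≤ c) (hd : 0 ≤ d)
    (he : 0 ≤ e) (hf : 0 ≤ f)
    (h1 : √a ≤ √b + √c) (h2 : √d ≤ √e + √f) : √(a + d) ≤ √(b + e) + √(c + f) := by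
  have hle : a + d ≤ (√b + √c)^2 + (√e + √f)^2 := by
    have := pow_le_pow_left₀ (Real.sqrt_nonneg a) h1 2
    have := pow_le_pow_left₀ (Real.sqrt_nonneg d) h2 2
    rw [Real.sq_sqrt ha] at *
    rw [Real.sq_sqrt hd] at *
    linarith
  apply Real.sqrt_le_iff.2 ⟨by positivity, hle.trans ?_⟩
  have hcs : √b * √c + √e * √f ≤ √(b + e) * √(c + f) := by
    rw [← Real.sqrt_mul (add_nonneg hb he)]
    apply Real.le_sqrt_of_sq_le
    have hB := Real.sq_sqrt hb
    have hC := Real.sq_sqrt hc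
    have hE := Real.sq_sqrt he
    have hF := Real.sq_sqrt hf
    nlinarith [sq_nonneg (√b * √f - √c * √e)]
  have := Real.sq_sqrt (add_nonneg hb he)
  have := Real.sq_sqrt (add_nonneg hc hf)
  have hB := Real.sq_sqrt hb
  have hC := Real.sq_sqrt hc
  have hE := Real.sq_sqrt he
  have hF := Real.sq_sqrt hf
  nlinarith

lemma jb_triangle {a b c : ℝ} (ha : a ∈ Set.Icc (0:ℝ) 1) (hb : b ∈ Set.Icc (0:ℝ) 1)
    (hc : c ∈ Set.Icc (0:ℝ) 1) : √(jb a c) ≤ √(jb a b) + √(jb b c) := by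
  obtain ⟨ha0, ha1⟩ := ha
  obtain ⟨hb0, hb1⟩ := hb
  obtain ⟨hc0, hc1⟩ := hc
  have ha1 := sub_nonneg.2 ha1
  have hb1 := sub_nonneg.2 hb1
  have hc1 := sub_nonneg.2 hc1
  unfold jb
  simp only [Real.sqrt_mul (show (0:ℝ) ≤ 1/2 by norm_num)]
  rw [← mul_add]
  apply mul_le_mul_of_nonneg_left _ (Real.sqrt_nonneg _)
  apply sqrt_add_triangle <;> first | (apply ll_nonneg <;> assumption) | (apply ll_triangle <;> assumption)

lemma jb_le {a b : ℝ} (ha : a ∈ Set.Icc (0:ℝ) 1) (hb : b ∈ Set.Icc (0:ℝ) 1) :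
    jb a b ≤ |a - b| := by
  obtain ⟨ha0, ha1⟩ := ha
  obtain ⟨hb0, hb1⟩ := hb
  have h1 := ll_le ha0 hb0
  have h2 := ll_le (sub_nonneg.2 ha1) (sub_nonneg.2 hb1)
  have : (1 - a) - (1 - b) = -(a - b) := by ring
  rw [this, abs_neg] at h2
  unfold jb; linarith

lemma jb_comm (a b : ℝ) : jb a b = jb b a := by
  unfold jb; rw [ll_comm, ll_comm (1 - a)]

section KL
variable {Ω : Type*} [MeasurableSpace Ω]

lemma isProb_mid (μ ν : Measure Ω) [IsProbabilityMeasure μ] [IsProbabilityMeasure ν] :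
    IsProbabilityMeasure ((2 : ℝ≥0∞)⁻¹ • (μ + ν)) := by
  constructor
  simp only [Measure.smul_apply, Measure.add_apply, measure_univ, smul_eq_mul]
  rw [one_add_one_eq_two, ENNReal.inv_mul_cancel (by norm_num) (by norm_num)]

lemma ac_mid (μ ν : Measure Ω) : μ ≪ (2 : ℝ≥0∞)⁻¹ • (μ + ν) := by
  refine Measure.AbsolutelyContinuous.mk fun s _ h => ?_
  simp only [Measure.smul_apply, Measure.add_apply, smul_eq_mul, mul_eq_zero, add_eq_zero] at h
  rcases h with h | h
  · simp at h
  · exact h.1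

lemma rnDeriv_mid_le (μ ν : Measure Ω) [IsProbabilityMeasure μ] [IsProbabilityMeasure ν] :
    ∀ᵐ x ∂((2 : ℝ≥0∞)⁻¹ • (μ + ν)), μ.rnDeriv ((2 : ℝ≥0∞)⁻¹ • (μ + ν)) x ≤ 2 := by
  have := isProb_mid μ ν
  refine ae_le_of_forall_setLIntegral_le_of_sigmaFinite (g := fun _ => 2)
    (Measure.measurable_rnDeriv _ _) fun s hs _ => ?_
  refine (Measure.setLIntegral_rnDeriv_le s).trans ?_
  simp only [lintegral_const, Measure.restrict_apply_univ, Measure.smul_apply, Measure.add_apply,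
    smul_eq_mul]
  rw [← mul_assoc, ENNReal.mul_inv_cancel (by norm_num) (by norm_num), one_mul]
  exact le_self_add

lemma klDiv_mid_ne_top (μ ν : Measure Ω) [IsProbabilityMeasure μ] [IsProbabilityMeasure ν] :
    InformationTheory.klDiv μ ((2 : ℝ≥0∞)⁻¹ • (μ + ν)) ≠ ∞ := by
  have := isProb_mid μ ν
  rw [InformationTheory.klDiv_eq_lintegral_klFun_of_ac (ac_mid μ ν)]
  refine ne_top_of_le_ne_top (b := ENNReal.ofReal 5) (by simp) ?_
  calc _ ≤ ∫⁻ x, ENNReal.ofReal 5 ∂((2 : ℝ≥0∞)⁻¹ • (μ + ν)) := by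
        apply lintegral_mono_ae
        filter_upwards [rnDeriv_mid_le μ ν] with x hx
        apply ENNReal.ofReal_le_ofReal
        set r := (μ.rnDeriv ((2 : ℝ≥0∞)⁻¹ • (μ + ν)) x).toReal with hr
        have h0 : 0 ≤ r := ENNReal.toReal_nonneg
        have h2 : r ≤ 2 := ENNReal.toReal_le_of_le_ofReal (by norm_num) (by simpa using hx)
        rw [InformationTheory.klFun_apply]
        have := Real.log_le_self h0
        nlinarith
    _ = _ := by rw [lintegral_const, measure_univ, mul_one]

lemma klReal_mid_eq (μ ν : Measure Ω) [IsProbabilityMeasure μ] [IsProbabilityMeasure ν] :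
    klReal μ ((2 : ℝ≥0∞)⁻¹ • (μ + ν)) =
      (InformationTheory.klDiv μ ((2 : ℝ≥0∞)⁻¹ • (μ + ν))).toReal := by
  have := isProb_mid μ ν
  rw [InformationTheory.toReal_klDiv_of_measure_eq (ac_mid μ ν) (by simp only [measure_univ])]
  rfl

lemma klReal_mid_map_le {Ω' : Type*} [MeasurableSpace Ω'] (μ ν : Measure Ω)
    [IsProbabilityMeasure μ] [IsProbabilityMeasure ν] {f : Ω → Ω'} (hf : Measurable f) :
    klReal (μ.map f) ((2 : ℝ≥0∞)⁻¹ • (μ.map f + ν.map f)) ≤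
      klReal μ ((2 : ℝ≥0∞)⁻¹ • (μ + ν)) := by
  have := isProb_mid μ ν
  have := Measure.isProbabilityMeasure_map (μ := μ) hf.aemeasurable
  have := Measure.isProbabilityMeasure_map (μ := ν) hf.aemeasurable
  rw [klReal_mid_eq, klReal_mid_eq]
  apply ENNReal.toReal_mono (klDiv_mid_ne_top μ ν)
  rw [← Measure.map_add _ _ hf, ← Measure.map_smul]
  exact InformationTheory.klDiv_map_le _ _ hf

lemma jsDiv_eq (μ ν : Measure Ω) : jsDiv μ ν = (1 / 2) * klReal μ ((2 : ℝ≥0∞)⁻¹ • (μ + ν)) +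
    (1 / 2) * klReal ν ((2 : ℝ≥0∞)⁻¹ • (ν + μ)) := by
  rw [jsDiv, add_comm ν μ]

lemma jsDiv_map_le {Ω' : Type*} [MeasurableSpace Ω'] (μ ν : Measure Ω)
    [IsProbabilityMeasure μ] [IsProbabilityMeasure ν] {f : Ω → Ω'} (hf : Measurable f) :
    jsDiv (μ.map f) (ν.map f) ≤ jsDiv μ ν := by
  rw [jsDiv_eq, jsDiv_eq]
  have := klReal_mid_map_le μ ν hf
  have := klReal_mid_map_le ν μ hf
  linarith

/-- mass at one point contribution -/
lemma mass_log (μ ν : Measure ℝ) [IsProbabilityMeasure μ] [IsProbabilityMeasure ν] (x : ℝ) :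
    μ.real {x} * llr μ ((2 : ℝ≥0∞)⁻¹ • (μ + ν)) x =
      μ.real {x} * (Real.log (μ.real {x}) - Real.log ((μ.real {x} + ν.real {x}) / 2)) := by
  have := isProb_mid μ ν
  have h := Measure.setLIntegral_rnDeriv (ac_mid μ ν) {x}
  rw [lintegral_singleton] at h
  have h' := congrArg ENNReal.toReal h
  have hm : ((2 : ℝ≥0∞)⁻¹ • (μ + ν)).real {x} = (μ.real {x} + ν.real {x}) / 2 := by
    rw [measureReal_ennreal_smul_apply, measureReal_add_apply]
    simp; ring
  rw [ENNReal.toReal_mul, ← measureReal_def, ← measureReal_def, hm] at h'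
  rcases (measureReal_nonneg (μ := μ) (s := {x})).eq_or_lt with h0 | h0
  · simp [← h0]
  · have hpos : 0 < (μ.real {x} + ν.real {x}) / 2 := by
      have := measureReal_nonneg (μ := ν) (s := {x}); linarith
    rw [llr, ← Real.log_div h0.ne' hpos.ne', ← eq_div_of_mul_eq hpos.ne' h']

lemma integral_two (μ : Measure ℝ) [IsProbabilityMeasure μ] (h : ∀ᵐ x ∂μ, x = 0 ∨ x = 1)
    (f : ℝ → ℝ) : ∫ x, f x ∂μ = μ.real {1} * f 1 + μ.real {0} * f 0 := by
  have hs : ∀ᵐ x ∂μ, x ∈ (({0, 1} : Finset ℝ) : Set ℝ) := by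
    filter_upwards [h] with x hx
    simpa using hx
  have : μ.restrict (({0, 1} : Finset ℝ) : Set ℝ) = μ := Measure.restrict_eq_self_of_ae_mem hs
  rw [← this, setIntegral_finset]
  · rw [this]
    rw [Finset.sum_pair (by norm_num)]
    simp only [smul_eq_mul]; ring
  · exact IntegrableOn.finset

lemma mass_zero (μ : Measure ℝ) [IsProbabilityMeasure μ] (h : ∀ᵐ x ∂μ, x = 0 ∨ x = 1) :
    μ.real {0} = 1 - μ.real {1} := by
  have := integral_two μ h (fun _ => 1)
  simp at this
  linarith

lemma jsDiv_two (μ ν : Measure ℝ) [IsProbabilityMeasure μ] [IsProbabilityMeasure ν]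
    (h : ∀ᵐ x ∂μ, x = 0 ∨ x = 1) (h' : ∀ᵐ x ∂ν, x = 0 ∨ x = 1) :
    jsDiv μ ν = jb (μ.real {1}) (ν.real {1}) := by
  rw [jsDiv_eq, klReal, klReal, integral_two μ h, integral_two ν h', mass_log, mass_log, mass_log,
    mass_log, mass_zero μ h, mass_zero ν h', jb, ll, ll]
  rw [add_comm (ν.real {1}), add_comm (1 - ν.real {1})]
  ring

end KL

lemma mean_map {X : Type*} [MeasurableSpace X] (D : Measure X) [IsProbabilityMeasure D]
    (f : X → ℝ) (hf : Measurable f) (hfr : ∀ x, f x = 0 ∨ f x = 1) :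
    (D.map f).real {1} = ∫ x, f x ∂D ∧ (∀ᵐ x ∂(D.map f), x = 0 ∨ x = 1) ∧ Integrable f D := by
  have := Measure.isProbabilityMeasure_map (μ := D) hf.aemeasurable
  have hae : ∀ᵐ x ∂(D.map f), x = 0 ∨ x = 1 := by
    rw [ae_map_iff hf.aemeasurable (by
      exact (measurableSet_singleton (0:ℝ)).union (measurableSet_singleton 1))]
    exact Filter.Eventually.of_forall hfr
  refine ⟨?_, hae, ?_⟩
  · have h1 := integral_two (D.map f) hae id
    rw [integral_map hf.aemeasurable (by fun_prop)] at h1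
    simpa using h1.symm
  · refine Integrable.of_bound hf.aestronglyMeasurable 1 (Filter.Eventually.of_forall fun x => ?_)
    rcases hfr x with h | h <;> simp [h]

lemma jb_map_le {X : Type*} [MeasurableSpace X] (D : Measure X) [IsProbabilityMeasure D]
    (f k : X → ℝ) (hf : Measurable f) (hfr : ∀ x, f x = 0 ∨ f x = 1)
    (hk : Measurable k) (hkr : ∀ x, k x = 0 ∨ k x = 1) :
    √(jb ((D.map f).real {1}) ((D.map k).real {1})) ≤ √(∫ x, |k x - f x| ∂D) := by
  have := Measure.isProbabilityMeasure_map (μ := D) hf.aemeasurable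
  have := Measure.isProbabilityMeasure_map (μ := D) hk.aemeasurable
  apply Real.sqrt_le_sqrt
  refine (jb_le ⟨measureReal_nonneg, measureReal_le_one⟩
    ⟨measureReal_nonneg, measureReal_le_one⟩).trans ?_
  obtain ⟨h1, _, h2⟩ := mean_map D f hf hfr
  obtain ⟨h3, _, h4⟩ := mean_map D k hk hkr
  rw [h1, h3, abs_sub_comm, ← integral_sub h4 h2]
  exact abs_integral_le_integral_abs

theorem stmt_10 {X Z : Type*} [MeasurableSpace X] [MeasurableSpace Z]
    (DS DT : Measure X) [IsProbabilityMeasure DS] [IsProbabilityMeasure DT]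
    (fS fT : X → ℝ) (hfS : Measurable fS) (hfT : Measurable fT)
    (hfSr : ∀ x, fS x = 0 ∨ fS x = 1) (hfTr : ∀ x, fT x = 0 ∨ fT x = 1)
    (g : X → Z) (hg : Measurable g)
    (h : Z → ℝ) (hh : Measurable h) (hhr : ∀ z, h z = 0 ∨ h z = 1)
    (hge : jsDist (Measure.map g DS) (Measure.map g DT) ≤
      jsDist (Measure.map fS DS) (Measure.map fT DT)) :
    (1 / 2) * (jsDist (Measure.map fS DS) (Measure.map fT DT) -
        jsDist (Measure.map g DS) (Measure.map g DT)) ^ 2 ≤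
      (∫ x, |h (g x) - fS x| ∂DS) + ∫ x, |h (g x) - fT x| ∂DT := by

  have i1 := Measure.isProbabilityMeasure_map (μ := DS) hfS.aemeasurable
  have i2 := Measure.isProbabilityMeasure_map (μ := DT) hfT.aemeasurable
  have i3 := Measure.isProbabilityMeasure_map (μ := DS) hg.aemeasurable
  have i4 := Measure.isProbabilityMeasure_map (μ := DT) hg.aemeasurable
  have hk : Measurable (fun x => h (g x)) := hh.comp hg
  have hkr : ∀ x, h (g x) = 0 ∨ h (g x) = 1 := fun x => hhr _
  have i5 := Measure.isProbabilityMeasure_map (μ := DS) hk.aemeasurable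
  have i6 := Measure.isProbabilityMeasure_map (μ := DT) hk.aemeasurable
  have e1 : jsDist (Measure.map fS DS) (Measure.map fT DT) =
      √(jb ((DS.map fS).real {1}) ((DT.map fT).real {1})) := by
    rw [jsDist, jsDiv_two _ _ (mean_map DS fS hfS hfSr).2.1 (mean_map DT fT hfT hfTr).2.1]
  have e2 : √(jb ((DS.map fun x => h (g x)).real {1}) ((DT.map fun x => h (g x)).real {1})) ≤
      jsDist (Measure.map g DS) (Measure.map g DT) := by
    rw [← jsDiv_two _ _ (mean_map DS _ hk hkr).2.1 (mean_map DT _ hk hkr).2.1]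
    apply Real.sqrt_le_sqrt
    have := jsDiv_map_le (DS.map g) (DT.map g) hh
    rwa [Measure.map_map hh hg, Measure.map_map hh hg] at this
  have b1 := jb_map_le DS fS _ hfS hfSr hk hkr
  have b2 := jb_map_le DT fT _ hfT hfTr hk hkr
  rw [jb_comm] at b2
  have m : ∀ (μ : Measure ℝ) [IsProbabilityMeasure μ], μ.real {1} ∈ Set.Icc (0:ℝ) 1 :=
    fun μ _ => ⟨measureReal_nonneg, measureReal_le_one⟩
  have t1 := jb_triangle (m (DS.map fS)) (m (DS.map fun x => h (g x))) (m (DT.map fT))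
  have t2 := jb_triangle (m (DS.map fun x => h (g x))) (m (DT.map fun x => h (g x)))
    (m (DT.map fT))
  rw [← e1] at t1
  have n1 : 0 ≤ ∫ x, |h (g x) - fS x| ∂DS := integral_nonneg fun x => abs_nonneg _
  have n2 : 0 ≤ ∫ x, |h (g x) - fT x| ∂DT := integral_nonneg fun x => abs_nonneg _
  set A := ∫ x, |h (g x) - fS x| ∂DS
  set B := ∫ x, |h (g x) - fT x| ∂DT
  have hle : jsDist (Measure.map fS DS) (Measure.map fT DT) -
      jsDist (Measure.map g DS) (Measure.map g DT) ≤ √A + √B := by linarith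
  have hsq := pow_le_pow_left₀ (sub_nonneg.2 hge) hle 2
  have sA := Real.sq_sqrt n1
  have sB := Real.sq_sqrt n2
  nlinarith [sq_nonneg (√A - √B)]
end
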